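/- With C, K₁ as in the measure estimate for L_K, for every K ≥ K₁ and every ν ∈ (0, K₁⁻²), the Lebesgue measure of the set O_K of times t ∈ [T₁,T₂] satisfying (i) K⁻¹ ≤ |u(t)|_{L∞} and max_x u_x(t,x) ≤ K, (ii') K⁻¹ν⁻¹ ≤ −min_x u_x(t,x) ≤ Kν⁻¹, and (iii) |u_xx(t)|_{L∞} ≤ Kν⁻², satisfies λ(O_K) ≥ C. -/

import Mathlib

/-!
Let `E₀ = ∫ u²` and `E_m = ν^(2m-1) ∫ (∂ₓᵐ u)²` for `m ≥ 1`, the integrals being over one period.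
Since `E₀' = -2 E₁`, and since Oleinik's bound `u_x ≤ (σ t)⁻¹` forces `E₀` to fall by a fixed amount
between `T₁` and `T₂`, the integral of `E₀ E₁` over `[T₁, T₂]` is bounded below uniformly in `ν`. As
`E₀ E₁` is also bounded above, it is bounded below on a set of times of uniformly positive measure.
The energy estimates for `u_x` and `u_xx` bound the integral of `E₂ + E₃` uniformly in `ν`, so
`E₂ + E₃` may be assumed bounded on this set as well.

At such a time Agmon's inequality bounds `ν |u_x|` and `ν² |u_xx|` from above. The lower bounds on
`|u|_∞` and `ν |u_x|_∞` come from the one on `E₀ E₁`: a periodic `u` whose derivative is bounded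
above by `B` satisfies `∫ u_x² ≤ 2 B |u_x|_∞`, because `u_x` has mean zero. If moreover `ν < K₁⁻²`,
then `u_x ≤ K₁ < K₁⁻¹ ν⁻¹ ≤ |u_x|_∞`, so that `|u_x|_∞ = -min u_x`.
-/

open MeasureTheory Set
open scoped ENNReal

/-- The `L^p` norm (on the circle, i.e. over one period `(0,1]`) of the `m`-th
derivative of a function `v : ℝ → ℝ` (identified with a function on `S¹ = ℝ/ℤ`). -/
noncomputable def sobLp (m : ℕ) (p : ℝ≥0∞) (v : ℝ → ℝ) : ℝ :=
  (eLpNorm (iteratedDeriv m v) p (volume.restrict (Ioc (0:ℝ) 1))).toReal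

/-- `u` is a smooth, space-periodic, zero-mean-value solution of the generalised
Burgers equation `u_t + f'(u) u_x - ν u_xx = 0` with strongly convex `f` and
nonzero initial condition. -/
structure IsBurgersSolution (f : ℝ → ℝ) (σ ν : ℝ) (u : ℝ → ℝ → ℝ) : Prop where
  hf : ContDiff ℝ (⊤ : ℕ∞) f
  hσ : 0 < σ
  hconv : ∀ y, σ ≤ iteratedDeriv 2 f y
  hν : 0 < ν
  hu : ContDiffOn ℝ (⊤ : ℕ∞) (Function.uncurry u) (Ici (0:ℝ) ×ˢ univ)
  hper : ∀ t x, u t (x + 1) = u t x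
  hpde : ∀ t, 0 < t → ∀ x,
    deriv (fun s => u s x) t + deriv f (u t x) * deriv (u t) x
      - ν * deriv (deriv (u t)) x = 0
  hmean : ∀ t, 0 ≤ t → ∫ x in Ioc (0:ℝ) 1, u t x = 0
  hinit : ∃ x, u 0 x ≠ 0

/-- The quantity `D = max(|u₀|₁⁻¹, |u₀|_{1,∞})`. -/
noncomputable def burgersD (u : ℝ → ℝ → ℝ) : ℝ :=
  max (sobLp 0 1 (u 0))⁻¹ (sobLp 1 ⊤ (u 0))

/-- `T₁ = D⁻² C̃⁻¹ / 4`. -/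
noncomputable def burgersT₁ (D Ct : ℝ) : ℝ := (D ^ 2)⁻¹ * Ct⁻¹ / 4

/-- `T₂ = max(3T₁/2, 2Dσ⁻¹)`. -/
noncomputable def burgersT₂ (σ D Ct : ℝ) : ℝ :=
  max (3 / 2 * burgersT₁ D Ct) (2 * D * σ⁻¹)

/-- Time average over `[T₁, T₂]`. -/
noncomputable def timeAvg (T₁ T₂ : ℝ) (A : ℝ → ℝ) : ℝ :=
  (T₂ - T₁)⁻¹ * ∫ t in T₁..T₂, A t

/-- The structure function `S_p(ℓ)`. -/
noncomputable def structFun (T₁ T₂ : ℝ) (u : ℝ → ℝ → ℝ) (p ℓ : ℝ) : ℝ :=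
  timeAvg T₁ T₂ (fun t => ∫ x in Ioc (0:ℝ) 1, |u t (x + ℓ) - u t x| ^ p)

open Filter Topology Function
open scoped ContDiff

section RealAnalysis

lemma nonneg_of_hasDerivAt_of_isMaxOn_Icc {g : ℝ → ℝ} {g' a t : ℝ} (h : HasDerivAt g g' t)
    (hat : a < t) (hmax : IsMaxOn g (Icc a t) t) : 0 ≤ g' := by
  have hcone : a - t ∈ posTangentConeAt (Icc a t) t :=
    sub_mem_posTangentConeAt_of_segment_subset
      ((convex_Icc a t).segment_subset (right_mem_Icc.2 hat.le) (left_mem_Icc.2 hat.le))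
  have hslope := hmax.localize.hasFDerivWithinAt_nonpos h.hasFDerivAt.hasFDerivWithinAt hcone
  simp only [ContinuousLinearMap.toSpanSingleton_apply, smul_eq_mul] at hslope
  exact nonneg_of_mul_nonpos_right hslope (sub_neg.2 hat)

lemma deriv_deriv_nonpos_of_isLocalMax {g : ℝ → ℝ} {x : ℝ} (hmax : IsLocalMax g x)
    (hg : ContinuousAt g x) : deriv (deriv g) x ≤ 0 := by
  by_contra! hpos
  have hmin : IsLocalMin g x := isLocalMin_of_deriv_deriv_pos hpos hmax.deriv_eq_zero hg
  have hconst : g =ᶠ[𝓝 x] fun _ => g x := by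
    filter_upwards [hmax, hmin] with y hle hge using le_antisymm hle hge
  have hzero : deriv (deriv g) x = 0 := by simpa using hconst.deriv.deriv_eq
  exact hpos.ne' hzero

lemma exists_sub_mul_eq_integral {v : ℝ → ℝ} {a b : ℝ} (hab : a ≠ b)
    (hv : ContinuousOn v (uIcc a b)) : ∃ z ∈ uIoo a b, (b - a) * v z = ∫ x in a..b, v x := by
  obtain ⟨z, hz, hvz⟩ := exists_eq_interval_average hab hv
  refine ⟨z, hz, ?_⟩
  rw [hvz, interval_average_eq, smul_eq_mul, mul_inv_cancel_left₀ (sub_ne_zero.2 hab.symm)]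

lemma exists_eq_zero_of_integral_eq_zero {v : ℝ → ℝ} {a b : ℝ} (hab : a ≠ b)
    (hv : ContinuousOn v (uIcc a b)) (hint : ∫ x in a..b, v x = 0) : ∃ z ∈ uIoo a b, v z = 0 := by
  obtain ⟨z, hz, hvz⟩ := exists_sub_mul_eq_integral hab hv
  exact ⟨z, hz, (mul_eq_zero.1 (hvz.trans hint)).resolve_left (sub_ne_zero.2 hab.symm)⟩

lemma integral_sq_le_of_integral_eq_zero {p : ℝ → ℝ} {a b B L : ℝ} (hab : a ≤ b)
    (hp : ContinuousOn p (Icc a b)) (hint : ∫ x in a..b, p x = 0) (hB : 0 ≤ B)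
    (hpB : ∀ x ∈ Icc a b, p x ≤ B) (hpL : ∀ x ∈ Icc a b, |p x| ≤ L) :
    ∫ x in a..b, p x ^ 2 ≤ 2 * B * L * (b - a) := by
  have hp' : ContinuousOn p (uIcc a b) := by rwa [uIcc_of_le hab]
  have hpoint : ∀ x ∈ Icc a b, p x ^ 2 ≤ 2 * B * L - L * p x := fun x hx => by
    have habs : |p x| ≤ 2 * B - p x := abs_le.2 ⟨by linarith, by linarith [hpB x hx]⟩
    nlinarith [mul_le_mul (hpL x hx) habs (abs_nonneg _) ((abs_nonneg _).trans (hpL x hx)),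
      sq_abs (p x)]
  calc ∫ x in a..b, p x ^ 2
      ≤ ∫ x in a..b, (2 * B * L - L * p x) :=
        intervalIntegral.integral_mono_on hab (hp'.pow 2).intervalIntegrable
          (continuousOn_const.sub (hp'.const_mul L)).intervalIntegrable hpoint
    _ = 2 * B * L * (b - a) := by
        rw [intervalIntegral.integral_sub intervalIntegrable_const
            (hp'.const_mul L).intervalIntegrable, intervalIntegral.integral_const,
          intervalIntegral.integral_const_mul, hint, smul_eq_mul]
        ring

lemma integral_le_of_mul_deriv_le {g g' h k : ℝ → ℝ} {a b c : ℝ} (hab : a ≤ b) (hc : 0 ≤ c)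
    (hg : ∀ t ∈ Icc a b, HasDerivAt g (g' t) t) (hh : ContinuousOn h (Icc a b))
    (hk : ContinuousOn k (Icc a b)) (hle : ∀ t ∈ Icc a b, c * g' t ≤ -h t + k t) (hb : 0 ≤ g b) :
    ∫ t in a..b, h t ≤ c * g a + ∫ t in a..b, k t := by
  have hcg : c * g b - c * g a ≤ ∫ t in a..b, (k t - h t) :=
    intervalIntegral.sub_le_integral_of_hasDeriv_right_of_le hab
      (fun t ht => ((hg t ht).const_mul c).continuousAt.continuousWithinAt)
      (fun t ht => ((hg t (Ioo_subset_Icc_self ht)).const_mul c).hasDerivWithinAt)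
      (hk.sub hh).integrableOn_Icc
      fun t ht => by linarith [hle t (Ioo_subset_Icc_self ht)]
  rw [intervalIntegral.integral_sub (hk.intervalIntegrable_of_Icc hab)
    (hh.intervalIntegrable_of_Icc hab)] at hcg
  linarith [mul_nonneg hc hb]

/-- A reverse Chebyshev inequality: on the complement of the set, either `g < θ` or `g < c * h`. -/
lemma integral_sub_mul_integral_le_measureReal {α : Type*} [MeasurableSpace α] {μ : Measure α}
    [IsFiniteMeasure μ] {g h : α → ℝ} {S c θ : ℝ} (hg : Integrable g μ) (hh : Integrable h μ)
    (hgS : ∀ᵐ x ∂μ, g x ≤ S) (hh0 : ∀ᵐ x ∂μ, 0 ≤ h x) (hc : 0 ≤ c) (hθ : 0 ≤ θ) :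
    ∫ x, g x ∂μ - c * ∫ x, h x ∂μ ≤
      S * μ.real {x | θ ≤ g x ∧ c * h x ≤ S} + θ * μ.real univ := by
  set A := {x | θ ≤ g x ∧ c * h x ≤ S}
  have hA : NullMeasurableSet A μ :=
    (nullMeasurableSet_le aemeasurable_const hg.aemeasurable).inter
      (nullMeasurableSet_le (hh.aemeasurable.const_mul c) aemeasurable_const)
  have hAint : Integrable (A.indicator fun _ => S) μ := (integrable_const S).indicator₀ hA
  calc ∫ x, g x ∂μ - c * ∫ x, h x ∂μ
      = ∫ x, (g x - c * h x) ∂μ := by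
        rw [integral_sub hg (hh.const_mul c), integral_const_mul]
    _ ≤ ∫ x, (A.indicator (fun _ => S) x + θ) ∂μ := by
        refine integral_mono_ae (hg.sub (hh.const_mul c)) (hAint.add (integrable_const θ)) ?_
        filter_upwards [hgS, hh0] with x hgx hhx
        by_cases hx : x ∈ A
        · rw [indicator_of_mem hx]
          linarith [mul_nonneg hc hhx]
        · rw [indicator_of_notMem hx, zero_add]
          rcases not_and_or.1 hx with hx | hx <;> linarith [mul_nonneg hc hhx]
    _ = S * μ.real A + θ * μ.real univ := by
        rw [integral_add hAint (integrable_const θ), integral_indicator₀ hA, setIntegral_const,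
          integral_const, smul_eq_mul, smul_eq_mul, mul_comm S, mul_comm θ]

lemma half_le_mul_volume_real {g h : ℝ → ℝ} {a b S η L : ℝ} (hab : a < b)
    (hg : ContinuousOn g (Icc a b)) (hh : ContinuousOn h (Icc a b)) (hgS : ∀ t ∈ Icc a b, g t ≤ S)
    (hh0 : ∀ t ∈ Icc a b, 0 ≤ h t) (hη : 0 < η) (hηg : η ≤ ∫ t in a..b, g t) (hL : 0 < L)
    (hhL : ∫ t in a..b, h t ≤ L) :
    η / 2 ≤ S * volume.real
      {t | t ∈ Icc a b ∧ η / (4 * (b - a)) ≤ g t ∧ h t ≤ S * (4 * L / η)} := by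
  have hba : 0 < b - a := sub_pos.2 hab
  have hcheb := integral_sub_mul_integral_le_measureReal (μ := volume.restrict (Icc a b))
    (c := η / (4 * L)) (θ := η / (4 * (b - a))) hg.integrableOn_Icc hh.integrableOn_Icc
    ((ae_restrict_iff' measurableSet_Icc).2 (ae_of_all _ hgS))
    ((ae_restrict_iff' measurableSet_Icc).2 (ae_of_all _ hh0)) (by positivity) (by positivity)
  rw [integral_Icc_eq_integral_Ioc, integral_Icc_eq_integral_Ioc,
    ← intervalIntegral.integral_of_le hab.le, ← intervalIntegral.integral_of_le hab.le,
    measureReal_restrict_apply' measurableSet_Icc, measureReal_restrict_apply' measurableSet_Icc,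
    univ_inter, Real.volume_real_Icc_of_le hab.le, inter_comm] at hcheb
  have hset : Icc a b ∩ {t | η / (4 * (b - a)) ≤ g t ∧ η / (4 * L) * h t ≤ S} =
      {t | t ∈ Icc a b ∧ η / (4 * (b - a)) ≤ g t ∧ h t ≤ S * (4 * L / η)} := by
    ext t
    rw [mem_inter_iff, mem_ofPred_eq, mem_ofPred_eq, ← inv_div η, ← div_eq_mul_inv,
      le_div_iff₀' (by positivity)]
  have hh_small : η / (4 * L) * (∫ t in a..b, h t) ≤ η / 4 :=
    (mul_le_mul_of_nonneg_left hhL (by positivity)).trans_eq (by field_simp)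
  have hθ : η / (4 * (b - a)) * (b - a) = η / 4 := by field_simp
  rw [hset, hθ] at hcheb
  linarith

end RealAnalysis

section Periodic

variable {v : ℝ → ℝ} {c z : ℝ}

lemma periodic_deriv (hv : Periodic v c) : Periodic (deriv v) c := fun x => by
  rw [← deriv_comp_add_const, funext hv]

lemma periodic_iteratedDeriv (hv : Periodic v c) (m : ℕ) : Periodic (iteratedDeriv m v) c :=
  fun x => by rw [← congrFun (iteratedDeriv_comp_add_const m v c), funext hv]

lemma integral_deriv_eq_zero_of_periodic (hv : Periodic v c) (hd : ContDiff ℝ 1 v) :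
    ∫ x in (0 : ℝ)..c, deriv v x = 0 := by
  rw [intervalIntegral.integral_deriv_eq_sub (fun x _ => hd.differentiable one_ne_zero x)
    ((hd.continuous_deriv le_rfl).intervalIntegrable _ _), hv.eq, sub_self]

lemma integral_mul_deriv_of_periodic {w : ℝ → ℝ} (hv : Periodic v c) (hw : Periodic w c)
    (hvd : ContDiff ℝ 1 v) (hwd : ContDiff ℝ 1 w) :
    ∫ x in (0 : ℝ)..c, v x * deriv w x = -∫ x in (0 : ℝ)..c, deriv v x * w x := by
  rw [intervalIntegral.integral_mul_deriv_eq_deriv_mul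
    (fun x _ => (hvd.differentiable one_ne_zero x).hasDerivAt)
    (fun x _ => (hwd.differentiable one_ne_zero x).hasDerivAt)
    ((hvd.continuous_deriv le_rfl).intervalIntegrable _ _)
    ((hwd.continuous_deriv le_rfl).intervalIntegrable _ _), hv.eq, hw.eq, sub_self, zero_sub]

lemma integral_comp_mul_deriv_eq_zero_of_periodic {g : ℝ → ℝ} (hv : Periodic v c)
    (hd : ContDiff ℝ 1 v) (hg : Continuous g) : ∫ x in (0 : ℝ)..c, g (v x) * deriv v x = 0 := by
  have hsubst := intervalIntegral.integral_comp_mul_deriv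
    (fun x _ => (hd.differentiable one_ne_zero x).hasDerivAt)
    (hd.continuous_deriv le_rfl).continuousOn hg (a := 0) (b := c)
  rwa [hv.eq, intervalIntegral.integral_same] at hsubst

lemma abs_le_of_periodic_of_deriv_le (hv : Periodic v c) (hc : 0 < c) (hd : Differentiable ℝ v)
    (hz : v z = 0) {B : ℝ} (hB : ∀ x, deriv v x ≤ B) (x : ℝ) : |v x| ≤ B * c := by
  have hincr := image_sub_le_mul_sub_of_deriv_le hd hB
  have hzc : v (z + c) = 0 := by rw [hv, hz]
  have hB0 : 0 ≤ B * c := by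
    have := hincr (le_add_of_nonneg_right hc.le : z ≤ z + c)
    rwa [hzc, hz, sub_self, add_sub_cancel_left] at this
  obtain ⟨y, ⟨hzy, hyc⟩, hxy⟩ := hv.exists_mem_Ico hc x z
  have hB0' : 0 ≤ B := nonneg_of_mul_nonneg_left hB0 hc
  rw [hxy, abs_le]
  constructor
  · nlinarith [hincr hyc.le, mul_le_mul_of_nonneg_left (by linarith : z + c - y ≤ c) hB0']
  · nlinarith [hincr hzy, mul_le_mul_of_nonneg_left (by linarith : y - z ≤ c) hB0']

/-- Agmon's inequality, with a free weight `ε`. -/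
lemma sq_le_integral_sq_add_of_periodic (hv : Periodic v c) (hc : 0 < c) (hd : ContDiff ℝ 1 v)
    (hz : v z = 0) {ε : ℝ} (hε : 0 < ε) (x : ℝ) :
    v x ^ 2 ≤ ε⁻¹ * (∫ y in (0 : ℝ)..c, v y ^ 2) + ε * ∫ y in (0 : ℝ)..c, deriv v y ^ 2 := by
  have hvc := hd.continuous
  have hv'c := hd.continuous_deriv le_rfl
  set φ : ℝ → ℝ := fun y => ε⁻¹ * v y ^ 2 + ε * deriv v y ^ 2 with hφ
  have hφc : Continuous φ := by fun_prop
  have hφ0 : ∀ y, 0 ≤ φ y := fun y => by positivity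
  have hφper : Periodic φ c := fun y => by simp only [hφ, hv y, periodic_deriv hv y]
  have hyoung : ∀ y, 2 * v y * deriv v y ≤ φ y := fun y => by
    have hsq : 0 ≤ ε⁻¹ * (v y - ε * deriv v y) ^ 2 := by positivity
    have hexp : ε⁻¹ * (v y - ε * deriv v y) ^ 2 = φ y - 2 * v y * deriv v y := by
      simp only [hφ]
      field_simp
      ring
    linarith
  obtain ⟨y, ⟨hzy, hyc⟩, hxy⟩ := hv.exists_mem_Ico hc x z
  calc v x ^ 2 = v y ^ 2 - v z ^ 2 := by rw [hxy, hz]; ring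
    _ = ∫ s in z..y, 2 * v s * deriv v s := by
        refine (intervalIntegral.integral_eq_sub_of_hasDerivAt (f := fun s => v s ^ 2)
          (fun s _ => ?_) ((by fun_prop : Continuous _).intervalIntegrable _ _)).symm
        simpa using (hd.differentiable one_ne_zero s).hasDerivAt.fun_pow 2
    _ ≤ ∫ s in z..y, φ s :=
        intervalIntegral.integral_mono hzy ((by fun_prop : Continuous _).intervalIntegrable _ _)
          (hφc.intervalIntegrable _ _) hyoung
    _ ≤ ∫ s in z..z + c, φ s :=
        intervalIntegral.integral_mono_interval le_rfl hzy hyc.le (ae_of_all _ hφ0)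
          (hφc.intervalIntegrable _ _)
    _ = ∫ s in (0 : ℝ)..c, φ s := by
        rw [hφper.intervalIntegral_add_eq z 0, zero_add]
    _ = _ := by
        rw [intervalIntegral.integral_add ((by fun_prop : Continuous _).intervalIntegrable _ _)
          ((by fun_prop : Continuous _).intervalIntegrable _ _),
          intervalIntegral.integral_const_mul, intervalIntegral.integral_const_mul]

end Periodic

section Sobolev

variable {m : ℕ} {p q : ℝ≥0∞} {v : ℝ → ℝ}

lemma sobLp_nonneg (m : ℕ) (p : ℝ≥0∞) (v : ℝ → ℝ) : 0 ≤ sobLp m p v :=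
  ENNReal.toReal_nonneg

lemma memLp_of_continuous_iteratedDeriv (hv : Continuous (iteratedDeriv m v)) (p : ℝ≥0∞) :
    MemLp (iteratedDeriv m v) p (volume.restrict (Ioc (0 : ℝ) 1)) := by
  obtain ⟨M, hM⟩ := isCompact_Icc.exists_bound_of_continuousOn (s := Icc (0 : ℝ) 1) hv.continuousOn
  refine MemLp.of_bound hv.aestronglyMeasurable M ?_
  filter_upwards [ae_restrict_mem measurableSet_Ioc] with x hx using hM x (Ioc_subset_Icc_self hx)

lemma sobLp_eq_lpNorm (hv : Continuous (iteratedDeriv m v)) :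
    sobLp m p v = lpNorm (iteratedDeriv m v) p (volume.restrict (Ioc (0 : ℝ) 1)) :=
  toReal_eLpNorm hv.aestronglyMeasurable

lemma sobLp_mono_exponent (hv : Continuous (iteratedDeriv m v)) (hpq : p ≤ q) :
    sobLp m p v ≤ sobLp m q v := by
  have : IsProbabilityMeasure (volume.restrict (Ioc (0 : ℝ) 1)) := ⟨by simp⟩
  exact ENNReal.toReal_mono (memLp_of_continuous_iteratedDeriv hv q).eLpNorm_ne_top
    (eLpNorm_le_eLpNorm_of_exponent_le hpq hv.aestronglyMeasurable)

lemma sobLp_two_sq (hv : Continuous (iteratedDeriv m v)) :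
    sobLp m 2 v ^ 2 = ∫ x in (0 : ℝ)..1, iteratedDeriv m v x ^ 2 := by
  rw [sobLp_eq_lpNorm hv, lpNorm_eq_integral_norm_rpow_toReal two_ne_zero ENNReal.ofNat_ne_top
    hv.aestronglyMeasurable, intervalIntegral.integral_of_le zero_le_one, ← Real.rpow_natCast,
    ← Real.rpow_mul (integral_nonneg fun _ => by positivity)]
  simp

lemma abs_iteratedDeriv_le_sobLp_top (hv : Continuous (iteratedDeriv m v)) (hper : Periodic v 1)
    (x : ℝ) : |iteratedDeriv m v x| ≤ sobLp m ⊤ v := by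
  set w := iteratedDeriv m v
  have hae : (fun y => max |w y| (sobLp m ⊤ v)) =ᵐ[volume.restrict (Icc (0 : ℝ) 1)]
      fun _ => sobLp m ⊤ v := by
    rw [← Measure.restrict_congr_set Ioc_ae_eq_Icc]
    filter_upwards [ae_le_lpNorm_exponent_top (memLp_of_continuous_iteratedDeriv hv ⊤)] with y hy
    rw [sobLp_eq_lpNorm hv]
    exact max_eq_right hy
  have heq := Measure.eqOn_Icc_of_ae_eq volume zero_ne_one hae (by fun_prop) (by fun_prop)
  obtain ⟨y, hy, hxy⟩ := (periodic_iteratedDeriv hper m).exists_mem_Ico one_pos x 0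
  rw [zero_add] at hy
  rw [show w x = w y from hxy]
  exact max_eq_right_iff.1 (heq (Ico_subset_Icc_self hy))

lemma sobLp_top_le {M : ℝ} (hM : 0 ≤ M) (h : ∀ x, |iteratedDeriv m v x| ≤ M) : sobLp m ⊤ v ≤ M :=
  ENNReal.toReal_le_of_le_ofReal hM <| by
    rw [eLpNorm_exponent_top]
    exact eLpNormEssSup_le_of_ae_bound (ae_of_all _ h)

lemma sobLp_pos (hv : Continuous (iteratedDeriv m v)) (hper : Periodic v 1) (hp : p ≠ 0) {x : ℝ}
    (hx : iteratedDeriv m v x ≠ 0) : 0 < sobLp m p v := by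
  refine (sobLp_nonneg m p v).lt_of_ne fun hzero => hx ?_
  rw [sobLp_eq_lpNorm hv, eq_comm, lpNorm_eq_zero (memLp_of_continuous_iteratedDeriv hv p) hp,
    Measure.restrict_congr_set Ioc_ae_eq_Icc] at hzero
  have heq := Measure.eqOn_Icc_of_ae_eq volume zero_ne_one hzero hv.continuousOn continuousOn_const
  obtain ⟨y, hy, hxy⟩ := (periodic_iteratedDeriv hper m).exists_mem_Ico one_pos x 0
  rw [zero_add] at hy
  rw [hxy]
  exact heq (Ico_subset_Icc_self hy)

end Sobolev

section RescaledEnergy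

/-- The squared `L²` norm of the `m`-th derivative over a period, rescaled by the power of `ν` which
makes it of order one for the Burgers flow. The truncated subtraction is deliberate: it gives the
factor `1` for `m = 0`. -/
noncomputable def rescaledEnergy (ν : ℝ) (m : ℕ) (v : ℝ → ℝ) : ℝ :=
  ν ^ (2 * m - 1) * ∫ x in (0 : ℝ)..1, iteratedDeriv m v x ^ 2

variable {ν : ℝ} {v : ℝ → ℝ}

lemma rescaledEnergy_nonneg (hν : 0 ≤ ν) (m : ℕ) (v : ℝ → ℝ) : 0 ≤ rescaledEnergy ν m v :=
  mul_nonneg (pow_nonneg hν _)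
    (intervalIntegral.integral_nonneg zero_le_one fun _ _ => sq_nonneg _)

lemma rescaledEnergy_zero (ν : ℝ) (v : ℝ → ℝ) :
    rescaledEnergy ν 0 v = ∫ x in (0 : ℝ)..1, v x ^ 2 := by
  simp [rescaledEnergy]

lemma rescaledEnergy_succ (ν : ℝ) (m : ℕ) (v : ℝ → ℝ) :
    rescaledEnergy ν (m + 1) v =
      ν ^ (2 * m + 1) * ∫ x in (0 : ℝ)..1, iteratedDeriv (m + 1) v x ^ 2 := by
  simp [rescaledEnergy, mul_add]

lemma rescaledEnergy_one (hv : Continuous (iteratedDeriv 1 v)) :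
    rescaledEnergy ν 1 v = ν * sobLp 1 2 v ^ 2 := by
  rw [rescaledEnergy_succ, sobLp_two_sq hv, mul_zero, zero_add, pow_one]

lemma rescaledEnergy_zero_le {B L : ℝ} (hv : Continuous v) (hB : ∀ x, |v x| ≤ B)
    (hL : ∀ x, |v x| ≤ L) : rescaledEnergy ν 0 v ≤ B * L := by
  have hpoint : ∀ x, v x ^ 2 ≤ B * L := fun x => by
    rw [← sq_abs, sq]
    exact mul_le_mul (hB x) (hL x) (abs_nonneg _) ((abs_nonneg _).trans (hB x))
  rw [rescaledEnergy_zero]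
  refine (intervalIntegral.integral_mono zero_le_one ((hv.pow 2).intervalIntegrable _ _)
    intervalIntegrable_const hpoint).trans_eq ?_
  simp

lemma rescaledEnergy_one_le {B L : ℝ} (hν : 0 ≤ ν) (hv : ContDiff ℝ 1 v) (hper : Periodic v 1)
    (hB0 : 0 ≤ B) (hB : ∀ x, deriv v x ≤ B) (hL : ∀ x, |deriv v x| ≤ L) :
    rescaledEnergy ν 1 v ≤ 2 * B * (ν * L) := by
  have hsq := integral_sq_le_of_integral_eq_zero zero_le_one
    (hv.continuous_deriv le_rfl).continuousOn (integral_deriv_eq_zero_of_periodic hper hv) hB0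
    (fun x _ => hB x) (fun x _ => hL x)
  rw [rescaledEnergy_succ, iteratedDeriv_one, mul_zero, zero_add, pow_one]
  linarith [mul_le_mul_of_nonneg_left hsq hν]

lemma contDiff_iteratedDeriv_of_contDiff_infty (hv : ContDiff ℝ ∞ v) (m : ℕ) :
    ContDiff ℝ ∞ (iteratedDeriv m v) := by
  rw [iteratedDeriv_eq_iterate]
  exact hv.iterate_deriv m

lemma continuous_iteratedDeriv_of_contDiff_infty (hv : ContDiff ℝ ∞ v) (m : ℕ) :
    Continuous (iteratedDeriv m v) :=
  (contDiff_iteratedDeriv_of_contDiff_infty hv m).continuous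

lemma exists_iteratedDeriv_succ_eq_zero (hv : ContDiff ℝ ∞ v) (hper : Periodic v 1) (m : ℕ) :
    ∃ z, iteratedDeriv (m + 1) v z = 0 := by
  have hmean := integral_deriv_eq_zero_of_periodic (periodic_iteratedDeriv hper m)
    ((contDiff_iteratedDeriv_of_contDiff_infty hv m).of_le (by simp))
  rw [← iteratedDeriv_succ] at hmean
  obtain ⟨z, -, hz⟩ := exists_eq_zero_of_integral_eq_zero zero_ne_one
    (continuous_iteratedDeriv_of_contDiff_infty hv (m + 1)).continuousOn hmean
  exact ⟨z, hz⟩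

lemma sq_pow_mul_iteratedDeriv_le_rescaledEnergy (hν : 0 < ν) (hv : ContDiff ℝ ∞ v)
    (hper : Periodic v 1) (m : ℕ) (x : ℝ) :
    (ν ^ (m + 1) * iteratedDeriv (m + 1) v x) ^ 2 ≤
      rescaledEnergy ν (m + 1) v + rescaledEnergy ν (m + 2) v := by
  obtain ⟨z, hz⟩ := exists_iteratedDeriv_succ_eq_zero hv hper m
  have hagmon := sq_le_integral_sq_add_of_periodic (periodic_iteratedDeriv hper (m + 1)) one_pos
    ((contDiff_iteratedDeriv_of_contDiff_infty hv (m + 1)).of_le (by simp)) hz hν x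
  rw [← iteratedDeriv_succ] at hagmon
  refine (mul_pow _ _ 2).trans_le
    ((mul_le_mul_of_nonneg_left hagmon (by positivity)).trans_eq ?_)
  rw [rescaledEnergy_succ, rescaledEnergy_succ]
  field_simp
  ring

lemma pow_mul_integral_mul_sq_le {ψ : ℝ → ℝ} {F : ℝ} (hν : 0 ≤ ν) (hv : ContDiff ℝ ∞ v)
    (hψ : Continuous ψ) (hF : ∀ x, ψ x ^ 2 ≤ F) (m : ℕ) :
    ν ^ (2 * m + 1) * ∫ x in (0 : ℝ)..1, (ψ x * iteratedDeriv (m + 1) v x) ^ 2 ≤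
      F * rescaledEnergy ν (m + 1) v := by
  have hp := continuous_iteratedDeriv_of_contDiff_infty hv (m + 1)
  rw [rescaledEnergy_succ, mul_left_comm, ← intervalIntegral.integral_const_mul F]
  refine mul_le_mul_of_nonneg_left (intervalIntegral.integral_mono zero_le_one
    (Continuous.intervalIntegrable (by fun_prop) _ _)
    (Continuous.intervalIntegrable (by fun_prop) _ _) fun x => ?_) (pow_nonneg hν _)
  simp only [mul_pow]
  exact mul_le_mul_of_nonneg_right (hF x) (sq_nonneg _)

lemma pow_mul_integral_add_sq_le {φ ψ : ℝ → ℝ} {F G : ℝ} (hν : 0 < ν) (hv : ContDiff ℝ ∞ v)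
    (hper : Periodic v 1) (hφ : Continuous φ) (hψ : Continuous ψ) (hG : ∀ x, φ x ^ 2 ≤ G)
    (hF : ∀ x, ψ x ^ 2 ≤ F) :
    ν ^ 3 * ∫ x in (0 : ℝ)..1,
        (φ x * iteratedDeriv 1 v x ^ 2 + ψ x * iteratedDeriv 2 v x) ^ 2 ≤
      2 * (G * (rescaledEnergy ν 1 v + rescaledEnergy ν 2 v) * rescaledEnergy ν 1 v +
        F * rescaledEnergy ν 2 v) := by
  set p := iteratedDeriv 1 v
  set q := iteratedDeriv 2 v
  have hp : Continuous p := continuous_iteratedDeriv_of_contDiff_infty hv 1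
  have hq : Continuous q := continuous_iteratedDeriv_of_contDiff_infty hv 2
  have hsup : ∀ x, (φ x * (ν * p x)) ^ 2 ≤
      G * (rescaledEnergy ν 1 v + rescaledEnergy ν 2 v) := fun x => by
    have hνp := sq_pow_mul_iteratedDeriv_le_rescaledEnergy hν hv hper 0 x
    rw [zero_add, pow_one] at hνp
    rw [mul_pow]
    exact mul_le_mul (hG x) hνp (sq_nonneg _) ((sq_nonneg _).trans (hG x))
  have hquad := pow_mul_integral_mul_sq_le hν.le hv (ψ := fun x => φ x * (ν * p x)) (by fun_prop)
    hsup 0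
  rw [mul_zero, zero_add, pow_one] at hquad
  have hlin := pow_mul_integral_mul_sq_le hν.le hv hψ hF 1
  have hsplit : ν ^ 3 * ∫ x in (0 : ℝ)..1, (φ x * p x ^ 2 + ψ x * q x) ^ 2 ≤
      2 * (ν * (∫ x in (0 : ℝ)..1, (φ x * (ν * p x) * p x) ^ 2) +
        ν ^ 3 * ∫ x in (0 : ℝ)..1, (ψ x * q x) ^ 2) := by
    rw [← intervalIntegral.integral_const_mul, ← intervalIntegral.integral_const_mul,
      ← intervalIntegral.integral_const_mul, ← intervalIntegral.integral_add
        (Continuous.intervalIntegrable (by fun_prop) _ _)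
        (Continuous.intervalIntegrable (by fun_prop) _ _),
      ← intervalIntegral.integral_const_mul]
    refine intervalIntegral.integral_mono zero_le_one
      (Continuous.intervalIntegrable (by fun_prop) _ _)
      (Continuous.intervalIntegrable (by fun_prop) _ _) fun x => ?_
    linear_combination ν ^ 3 * add_sq_le (a := φ x * p x ^ 2) (b := ψ x * q x)
  exact hsplit.trans (mul_le_mul_of_nonneg_left (add_le_add hquad hlin) zero_le_two)

lemma sobLp_top_le_of_rescaledEnergy {K : ℝ} (hν : 0 < ν) (hv : ContDiff ℝ ∞ v)
    (hper : Periodic v 1) (hK : 0 ≤ K) (m : ℕ)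
    (hE : rescaledEnergy ν (m + 1) v + rescaledEnergy ν (m + 2) v ≤ K ^ 2) :
    sobLp (m + 1) ⊤ v ≤ K * (ν ^ (m + 1))⁻¹ := by
  have hνm : 0 < ν ^ (m + 1) := pow_pos hν _
  refine sobLp_top_le (by positivity) fun x => ?_
  rw [← div_eq_mul_inv, le_div_iff₀' hνm, ← abs_of_pos hνm, ← abs_mul]
  exact abs_le_of_sq_le_sq
    ((sq_pow_mul_iteratedDeriv_le_rescaledEnergy hν hv hper m x).trans hE) hK

end RescaledEnergy

section SliceConditions

/-- The conditions (i), (ii), (iii) on the slice `v = u(t)` which define the set `L_K` of times. -/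
def LCondition (K ν : ℝ) (v : ℝ → ℝ) : Prop :=
  (K⁻¹ ≤ sobLp 0 ⊤ v ∧ ∀ x, deriv v x ≤ K) ∧
    (K⁻¹ * ν⁻¹ ≤ sobLp 1 ⊤ v ∧ sobLp 1 ⊤ v ≤ K * ν⁻¹) ∧ sobLp 2 ⊤ v ≤ K * (ν ^ 2)⁻¹

/-- The conditions (i), (ii'), (iii) on the slice `v = u(t)` which define the set `O_K` of times. -/
def OCondition (K ν : ℝ) (v : ℝ → ℝ) : Prop :=
  (K⁻¹ ≤ sobLp 0 ⊤ v ∧ ∀ x, deriv v x ≤ K) ∧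
    (K⁻¹ * ν⁻¹ ≤ -sInf (deriv v '' Icc (0 : ℝ) 1) ∧
      -sInf (deriv v '' Icc (0 : ℝ) 1) ≤ K * ν⁻¹) ∧ sobLp 2 ⊤ v ≤ K * (ν ^ 2)⁻¹

variable {K K' ν : ℝ} {v : ℝ → ℝ}

lemma LCondition.mono (h : LCondition K ν v) (hK : 0 < K) (hν : 0 < ν) (hKK' : K ≤ K') :
    LCondition K' ν v := by
  obtain ⟨⟨hsup, hderiv⟩, ⟨hlow, hupp⟩, hsnd⟩ := h
  have hinv : K'⁻¹ ≤ K⁻¹ := inv_anti₀ hK hKK'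
  exact ⟨⟨hinv.trans hsup, fun x => (hderiv x).trans hKK'⟩,
    ⟨le_trans (by gcongr) hlow, hupp.trans (by gcongr)⟩, hsnd.trans (by gcongr)⟩

lemma OCondition.mono (h : OCondition K ν v) (hK : 0 < K) (hν : 0 < ν) (hKK' : K ≤ K') :
    OCondition K' ν v := by
  obtain ⟨⟨hsup, hderiv⟩, ⟨hlow, hupp⟩, hsnd⟩ := h
  have hinv : K'⁻¹ ≤ K⁻¹ := inv_anti₀ hK hKK'
  exact ⟨⟨hinv.trans hsup, fun x => (hderiv x).trans hKK'⟩,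
    ⟨le_trans (by gcongr) hlow, hupp.trans (by gcongr)⟩, hsnd.trans (by gcongr)⟩

/-- Since `v' ≤ K < K⁻¹ν⁻¹ ≤ |v'|_∞`, the supremum of `|v'|` is attained where `v'` is negative. -/
lemma LCondition.oCondition (h : LCondition K ν v) (hv : ContDiff ℝ ∞ v) (hper : Periodic v 1)
    (hK : 0 < K) (hν : 0 < ν) (hνK : ν < (K ^ 2)⁻¹) : OCondition K ν v := by
  obtain ⟨hsup, ⟨hlow, hupp⟩, hsnd⟩ := h
  set w := deriv v
  set μ := sInf (w '' Icc (0 : ℝ) 1)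
  have hsob : ∀ x, |w x| ≤ sobLp 1 ⊤ v := fun x => by
    simpa only [iteratedDeriv_one] using
      abs_iteratedDeriv_le_sobLp_top (continuous_iteratedDeriv_of_contDiff_infty hv 1) hper x
  have hbdd : BddBelow (w '' Icc (0 : ℝ) 1) :=
    ⟨-sobLp 1 ⊤ v, forall_mem_image.2 fun x _ => (abs_le.1 (hsob x)).1⟩
  have hμ : ∀ x, μ ≤ w x := fun x => by
    obtain ⟨y, hy, hxy⟩ := (periodic_deriv hper).exists_mem_Ico one_pos x 0
    rw [zero_add] at hy
    rw [show w x = w y from hxy]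
    exact csInf_le hbdd (mem_image_of_mem w (Ico_subset_Icc_self hy))
  have hμ_ge : -sobLp 1 ⊤ v ≤ μ :=
    le_csInf ((nonempty_Icc.2 zero_le_one).image w)
      (forall_mem_image.2 fun x _ => (abs_le.1 (hsob x)).1)
  have hsob_le : sobLp 1 ⊤ v ≤ max K (-μ) :=
    sobLp_top_le (hK.le.trans (le_max_left _ _)) fun x => by
      rw [iteratedDeriv_one, abs_le]
      exact ⟨by linarith [hμ x, le_max_right K (-μ)], (hsup.2 x).trans (le_max_left _ _)⟩
  have hlarge : K < K⁻¹ * ν⁻¹ := by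
    have hνinv := (lt_inv_comm₀ hν (by positivity)).1 hνK
    rw [inv_mul_eq_div, lt_div_iff₀ hK]
    linarith [sq K]
  exact ⟨hsup, ⟨(le_max_iff.1 (hlow.trans hsob_le)).resolve_left hlarge.not_ge,
    (neg_le.1 hμ_ge).trans hupp⟩, hsnd⟩

lemma inv_le_sobLp_zero_top_of_rescaledEnergy {B M θ : ℝ} (hν : 0 ≤ ν) (hv : Continuous v)
    (hper : Periodic v 1) (hB : ∀ x, |v x| ≤ B) (hθ : 0 < θ)
    (hθE : θ ≤ rescaledEnergy ν 0 v * rescaledEnergy ν 1 v) (hM : rescaledEnergy ν 1 v ≤ M)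
    (hK : 0 < K) (hKM : M * B ≤ K * θ) : K⁻¹ ≤ sobLp 0 ⊤ v := by
  have hs : 0 ≤ sobLp 0 ⊤ v := sobLp_nonneg 0 ⊤ v
  have hB0 : 0 ≤ B := (abs_nonneg _).trans (hB 0)
  have hE0 : rescaledEnergy ν 0 v ≤ B * sobLp 0 ⊤ v := rescaledEnergy_zero_le hv hB fun x => by
    simpa using abs_iteratedDeriv_le_sobLp_top (m := 0) (by simpa using hv) hper x
  have hprod := hθE.trans (mul_le_mul hE0 hM (rescaledEnergy_nonneg hν 1 v) (by positivity))
  rw [inv_le_iff_one_le_mul₀ hK]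
  nlinarith [mul_le_mul_of_nonneg_left hKM hs]

lemma inv_mul_inv_le_sobLp_one_top_of_rescaledEnergy {B θ : ℝ} (hν : 0 < ν) (hv : ContDiff ℝ 1 v)
    (hper : Periodic v 1) (hB : ∀ x, |v x| ≤ B) (hdB : ∀ x, deriv v x ≤ B) (hθ : 0 < θ)
    (hθE : θ ≤ rescaledEnergy ν 0 v * rescaledEnergy ν 1 v) (hK : 0 < K)
    (hKB : 2 * B ^ 3 ≤ K * θ) : K⁻¹ * ν⁻¹ ≤ sobLp 1 ⊤ v := by
  have hs : 0 ≤ ν * sobLp 1 ⊤ v := mul_nonneg hν.le (sobLp_nonneg 1 ⊤ v)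
  have hE0 : rescaledEnergy ν 0 v ≤ B * B := rescaledEnergy_zero_le hv.continuous hB hB
  have hE1 : rescaledEnergy ν 1 v ≤ 2 * B * (ν * sobLp 1 ⊤ v) :=
    rescaledEnergy_one_le hν.le hv hper ((abs_nonneg _).trans (hB 0)) hdB fun x => by
      simpa only [iteratedDeriv_one] using abs_iteratedDeriv_le_sobLp_top (m := 1)
        (by simpa only [iteratedDeriv_one] using hv.continuous_deriv le_rfl) hper x
  have hprod := hθE.trans
    (mul_le_mul hE0 hE1 (rescaledEnergy_nonneg hν.le 1 v) (mul_self_nonneg B))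
  rw [← mul_inv, inv_le_iff_one_le_mul₀ (by positivity)]
  nlinarith [mul_le_mul_of_nonneg_left hKB hs]

lemma lCondition_of_rescaledEnergy {B M L θ : ℝ} (hν : 0 < ν) (hv : ContDiff ℝ ∞ v)
    (hper : Periodic v 1) (hB : ∀ x, |v x| ≤ B) (hdB : ∀ x, deriv v x ≤ B)
    (hθ : 0 < θ) (hθE : θ ≤ rescaledEnergy ν 0 v * rescaledEnergy ν 1 v)
    (hM : rescaledEnergy ν 1 v ≤ M) (hL : rescaledEnergy ν 2 v + rescaledEnergy ν 3 v ≤ L)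
    (hK : 1 ≤ K) (hKB : B ≤ K) (hKM : M * B ≤ K * θ) (hKB' : 2 * B ^ 3 ≤ K * θ)
    (hKL : M + L ≤ K) : LCondition K ν v := by
  have hK0 : 0 < K := one_pos.trans_le hK
  have hKL' : M + L ≤ K ^ 2 := hKL.trans (le_self_pow₀ hK two_ne_zero)
  have hE1 := rescaledEnergy_nonneg hν.le 1 v
  have hE3 := rescaledEnergy_nonneg hν.le 3 v
  have hgrad_le : sobLp 1 ⊤ v ≤ K * ν⁻¹ := by
    simpa using sobLp_top_le_of_rescaledEnergy hν hv hper hK0.le 0 (by linarith)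
  exact ⟨⟨inv_le_sobLp_zero_top_of_rescaledEnergy hν.le hv.continuous hper hB hθ hθE hM hK0 hKM,
      fun x => (hdB x).trans hKB⟩,
    ⟨inv_mul_inv_le_sobLp_one_top_of_rescaledEnergy hν (hv.of_le (by simp)) hper hB hdB hθ hθE hK0
      hKB', hgrad_le⟩,
    sobLp_top_le_of_rescaledEnergy hν hv hper hK0.le 1 (by linarith)⟩

end SliceConditions

section PartialDerivatives

variable {Φ : ℝ × ℝ → ℝ} {t x : ℝ}

lemma hasDerivAt_comp_prodMk_left (h : DifferentiableAt ℝ Φ (t, x)) :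
    HasDerivAt (fun s => Φ (s, x)) (fderiv ℝ Φ (t, x) (1, 0)) t :=
  h.hasFDerivAt.comp_hasDerivAt t ((hasDerivAt_id t).prodMk (hasDerivAt_const t x))

lemma hasDerivAt_comp_prodMk_right (h : DifferentiableAt ℝ Φ (t, x)) :
    HasDerivAt (fun y => Φ (t, y)) (fderiv ℝ Φ (t, x) (0, 1)) x :=
  h.hasFDerivAt.comp_hasDerivAt x ((hasDerivAt_const x t).prodMk (hasDerivAt_id x))

lemma fderiv_fderiv_apply {E F : Type*} [NormedAddCommGroup E] [NormedSpace ℝ E]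
    [NormedAddCommGroup F] [NormedSpace ℝ F] {Ψ : E → F} {p : E}
    (h : DifferentiableAt ℝ (fderiv ℝ Ψ) p) (d e : E) :
    fderiv ℝ (fun q => fderiv ℝ Ψ q d) p e = fderiv ℝ (fderiv ℝ Ψ) p e d := by
  rw [fderiv_clm_apply h (differentiableAt_const d)]
  simp

end PartialDerivatives

/-- The partial derivative in the first variable of a function of time and space. -/
noncomputable def timeDeriv (W : ℝ → ℝ → ℝ) (t x : ℝ) : ℝ := deriv (fun s => W s x) t

/-- Functions on `(0, ∞) × ℝ` which are smooth jointly in time and space and `1`-periodic in space.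
Values at nonpositive times are irrelevant except for the periodicity. -/
structure IsSmoothPeriodic (W : ℝ → ℝ → ℝ) : Prop where
  contDiffOn : ContDiffOn ℝ ∞ (uncurry W) (Ioi 0 ×ˢ univ)
  periodic : ∀ t, Periodic (W t) 1

namespace IsSmoothPeriodic

variable {V W : ℝ → ℝ → ℝ} {t : ℝ}

lemma contDiffAt (h : IsSmoothPeriodic W) (ht : 0 < t) (x : ℝ) :
    ContDiffAt ℝ ∞ (uncurry W) (t, x) :=
  h.contDiffOn.contDiffAt (prod_mem_nhds (Ioi_mem_nhds ht) univ_mem)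

lemma differentiableAt (h : IsSmoothPeriodic W) (ht : 0 < t) (x : ℝ) :
    DifferentiableAt ℝ (uncurry W) (t, x) :=
  (h.contDiffAt ht x).differentiableAt (by simp)

lemma contDiff_slice (h : IsSmoothPeriodic W) (ht : 0 < t) : ContDiff ℝ ∞ (W t) :=
  contDiff_iff_contDiffAt.2 fun x =>
    (h.contDiffAt ht x).comp x (contDiffAt_const.prodMk contDiffAt_id)

lemma continuous_slice (h : IsSmoothPeriodic W) (ht : 0 < t) : Continuous (W t) :=
  (h.contDiff_slice ht).continuous

lemma hasDerivAt_time (h : IsSmoothPeriodic W) (ht : 0 < t) (x : ℝ) :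
    HasDerivAt (fun s => W s x) (timeDeriv W t x) t :=
  (hasDerivAt_comp_prodMk_left (h.differentiableAt ht x)).differentiableAt.hasDerivAt

lemma timeDeriv_eq_fderiv (h : IsSmoothPeriodic W) (ht : 0 < t) (x : ℝ) :
    timeDeriv W t x = fderiv ℝ (uncurry W) (t, x) (1, 0) :=
  (hasDerivAt_comp_prodMk_left (h.differentiableAt ht x)).deriv

lemma deriv_eq_fderiv (h : IsSmoothPeriodic W) (ht : 0 < t) (x : ℝ) :
    deriv (W t) x = fderiv ℝ (uncurry W) (t, x) (0, 1) :=
  (hasDerivAt_comp_prodMk_right (h.differentiableAt ht x)).deriv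

lemma contDiffOn_fderiv (h : IsSmoothPeriodic W) :
    ContDiffOn ℝ ∞ (fderiv ℝ (uncurry W)) (Ioi 0 ×ˢ univ) :=
  h.contDiffOn.fderiv_of_isOpen (isOpen_Ioi.prod isOpen_univ) (by simp)

lemma deriv_space (h : IsSmoothPeriodic W) : IsSmoothPeriodic fun t => deriv (W t) where
  contDiffOn := (h.contDiffOn_fderiv.clm_apply contDiffOn_const).congr
    fun p hp => h.deriv_eq_fderiv hp.1 p.2
  periodic t := periodic_deriv (h.periodic t)

lemma deriv_time (h : IsSmoothPeriodic W) : IsSmoothPeriodic (timeDeriv W) where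
  contDiffOn := (h.contDiffOn_fderiv.clm_apply contDiffOn_const).congr
    fun p hp => h.timeDeriv_eq_fderiv hp.1 p.2
  periodic t x := by simp only [timeDeriv, (h.periodic _) x]

lemma iteratedDeriv_space (h : IsSmoothPeriodic W) (m : ℕ) :
    IsSmoothPeriodic fun t => iteratedDeriv m (W t) := by
  induction m with
  | zero => simpa only [iteratedDeriv_zero] using h
  | succ m ih => simpa only [iteratedDeriv_succ] using ih.deriv_space

lemma mul (hV : IsSmoothPeriodic V) (hW : IsSmoothPeriodic W) :
    IsSmoothPeriodic fun t x => V t x * W t x where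
  contDiffOn := hV.contDiffOn.mul hW.contDiffOn
  periodic t := (hV.periodic t).mul (hW.periodic t)

lemma timeDeriv_deriv (h : IsSmoothPeriodic W) (ht : 0 < t) (x : ℝ) :
    timeDeriv (fun s => deriv (W s)) t x = deriv (timeDeriv W t) x := by
  have hfd : DifferentiableAt ℝ (fderiv ℝ (uncurry W)) (t, x) :=
    (h.contDiffOn_fderiv.contDiffAt (prod_mem_nhds (Ioi_mem_nhds ht) univ_mem)).differentiableAt
      (by simp)
  have hsymm : IsSymmSndFDerivAt ℝ (uncurry W) (t, x) :=
    (h.contDiffAt ht x).isSymmSndFDerivAt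
      (by simpa using (WithTop.coe_le_coe.2 le_top : ((2 : ℕ∞) : WithTop ℕ∞) ≤ (⊤ : ℕ∞)))
  have htime : (fun s => deriv (W s) x) =ᶠ[𝓝 t] fun s => fderiv ℝ (uncurry W) (s, x) (0, 1) := by
    filter_upwards [Ioi_mem_nhds ht] with s hs using h.deriv_eq_fderiv hs x
  have hspace : timeDeriv W t = fun y => fderiv ℝ (uncurry W) (t, y) (1, 0) :=
    funext fun y => h.timeDeriv_eq_fderiv ht y
  rw [timeDeriv, htime.deriv_eq, hspace,
    (hasDerivAt_comp_prodMk_left (hfd.clm_apply (differentiableAt_const _))).deriv,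
    (hasDerivAt_comp_prodMk_right (hfd.clm_apply (differentiableAt_const _))).deriv,
    fderiv_fderiv_apply hfd, fderiv_fderiv_apply hfd]
  exact hsymm _ _

lemma hasDerivAt_integral (h : IsSmoothPeriodic W) (ht : 0 < t) :
    HasDerivAt (fun s => ∫ x in (0 : ℝ)..1, W s x) (∫ x in (0 : ℝ)..1, timeDeriv W t x) t := by
  have hpos : ∀ {s}, s ∈ Icc (t / 2) (2 * t) → 0 < s := fun hs => (half_pos ht).trans_le hs.1
  obtain ⟨M, hM⟩ := (isCompact_Icc.prod isCompact_Icc : IsCompact (Icc (t / 2) (2 * t) ×ˢ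
    Icc (0 : ℝ) 1)).exists_bound_of_continuousOn
      (h.deriv_time.contDiffOn.continuousOn.mono fun p hp => ⟨hpos hp.1, mem_univ _⟩)
  refine (intervalIntegral.hasDerivAt_integral_of_dominated_loc_of_deriv_le
    (bound := fun _ => M) (Icc_mem_nhds (half_lt_self ht) (by linarith : t < 2 * t))
    ?_ ((h.continuous_slice ht).intervalIntegrable _ _)
    (h.deriv_time.continuous_slice ht).aestronglyMeasurable
    (ae_of_all _ fun x hx s hs => ?_) intervalIntegrable_const
    (ae_of_all _ fun x _ s hs => h.hasDerivAt_time (hpos hs) x)).2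
  · filter_upwards [Ioi_mem_nhds ht] with s hs using (h.continuous_slice hs).aestronglyMeasurable
  · rw [uIoc_of_le zero_le_one] at hx
    exact hM (s, x) ⟨hs, Ioc_subset_Icc_self hx⟩

lemma hasDerivAt_integral_sq (h : IsSmoothPeriodic W) (ht : 0 < t) :
    HasDerivAt (fun s => ∫ x in (0 : ℝ)..1, W s x ^ 2)
      (2 * ∫ x in (0 : ℝ)..1, W t x * timeDeriv W t x) t := by
  have hsq := (h.mul h).hasDerivAt_integral ht
  have htime : timeDeriv (fun s x => W s x * W s x) t = fun x => 2 * (W t x * timeDeriv W t x) :=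
    funext fun x => ((h.hasDerivAt_time ht x).mul (h.hasDerivAt_time ht x)).deriv.trans (by ring)
  rw [htime, intervalIntegral.integral_const_mul] at hsq
  simpa only [← sq] using hsq

lemma hasDerivAt_rescaledEnergy_zero (h : IsSmoothPeriodic W) (ht : 0 < t) (ν : ℝ) :
    HasDerivAt (fun s => rescaledEnergy ν 0 (W s))
      (2 * ∫ x in (0 : ℝ)..1, W t x * timeDeriv W t x) t := by
  simpa only [rescaledEnergy_zero] using h.hasDerivAt_integral_sq ht

lemma hasDerivAt_rescaledEnergy_succ (h : IsSmoothPeriodic W) (ht : 0 < t) (ν : ℝ) (m : ℕ) :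
    HasDerivAt (fun s => rescaledEnergy ν (m + 1) (W s))
      (-2 * ν ^ (2 * m + 1) * ∫ x in (0 : ℝ)..1,
        iteratedDeriv (m + 2) (W t) x * timeDeriv (fun s => iteratedDeriv m (W s)) t x) t := by
  have hm := h.iteratedDeriv_space m
  have hm1 := h.iteratedDeriv_space (m + 1)
  have htime : timeDeriv (fun s => iteratedDeriv (m + 1) (W s)) t =
      deriv (timeDeriv (fun s => iteratedDeriv m (W s)) t) := by
    simp only [iteratedDeriv_succ]
    exact funext fun x => hm.timeDeriv_deriv ht x
  have hparts := integral_mul_deriv_of_periodic (hm1.periodic t) (hm.deriv_time.periodic t)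
    ((hm1.contDiff_slice ht).of_le (by simp)) ((hm.deriv_time.contDiff_slice ht).of_le (by simp))
  rw [← htime, ← iteratedDeriv_succ] at hparts
  have hsq := (hm1.hasDerivAt_integral_sq ht).const_mul (ν ^ (2 * m + 1))
  rw [hparts] at hsq
  simp only [rescaledEnergy_succ]
  exact hsq.congr_deriv (by ring)

/-- The energy estimate for the heat equation with viscosity `ν` and right-hand side
`∂ₜ∂ₓᵐW - ν∂ₓᵐ⁺²W`, which Young's inequality splits off from the dissipation. -/
lemma mul_deriv_rescaledEnergy_succ_le (h : IsSmoothPeriodic W) (ht : 0 < t) {ν : ℝ} (hν : 0 ≤ ν)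
    (m : ℕ) :
    ν * deriv (fun s => rescaledEnergy ν (m + 1) (W s)) t ≤ -rescaledEnergy ν (m + 2) (W t) +
      ν ^ (2 * m + 1) * ∫ x in (0 : ℝ)..1, (timeDeriv (fun s => iteratedDeriv m (W s)) t x -
        ν * iteratedDeriv (m + 2) (W t) x) ^ 2 := by
  set q := iteratedDeriv (m + 2) (W t)
  set w := timeDeriv (fun s => iteratedDeriv m (W s)) t
  have hq : Continuous q := (h.iteratedDeriv_space (m + 2)).continuous_slice ht
  have hw : Continuous w := (h.iteratedDeriv_space m).deriv_time.continuous_slice ht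
  have hexpand : ∫ x in (0 : ℝ)..1, (w x - ν * q x) ^ 2 = (∫ x in (0 : ℝ)..1, w x ^ 2) +
      ν ^ 2 * (∫ x in (0 : ℝ)..1, q x ^ 2) - 2 * ν * ∫ x in (0 : ℝ)..1, q x * w x := by
    rw [← intervalIntegral.integral_const_mul, ← intervalIntegral.integral_const_mul,
      ← intervalIntegral.integral_add (Continuous.intervalIntegrable (by fun_prop) _ _)
        (Continuous.intervalIntegrable (by fun_prop) _ _),
      ← intervalIntegral.integral_sub (Continuous.intervalIntegrable (by fun_prop) _ _)
        (Continuous.intervalIntegrable (by fun_prop) _ _)]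
    exact intervalIntegral.integral_congr fun x _ => by ring
  have hw0 : 0 ≤ ν ^ (2 * m + 1) * ∫ x in (0 : ℝ)..1, w x ^ 2 :=
    mul_nonneg (pow_nonneg hν _)
      (intervalIntegral.integral_nonneg zero_le_one fun _ _ => sq_nonneg _)
  rw [(h.hasDerivAt_rescaledEnergy_succ ht ν m).deriv, rescaledEnergy_succ, hexpand]
  linear_combination hw0

lemma continuousOn_rescaledEnergy (h : IsSmoothPeriodic W) (ν : ℝ) (m : ℕ) :
    ContinuousOn (fun t => rescaledEnergy ν m (W t)) (Ioi 0) := fun _ ht =>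
  (((h.iteratedDeriv_space m).hasDerivAt_integral_sq ht).const_mul _).continuousAt
    |>.continuousWithinAt

/-- The weak maximum principle: `W ≤ M` is only tested where a space-time maximum can occur. -/
lemma le_of_forall_critical (h : IsSmoothPeriodic W) {a b M : ℝ} (ha : 0 < a)
    (hinit : ∀ x, W a x ≤ M)
    (hcrit : ∀ t ∈ Ioc a b, ∀ x, deriv (W t) x = 0 → deriv (deriv (W t)) x ≤ 0 →
      0 ≤ timeDeriv W t x → W t x ≤ M) (ht : t ∈ Icc a b) (x : ℝ) : W t x ≤ M := by
  have hpos : ∀ {s}, s ∈ Icc a b → 0 < s := fun hs => ha.trans_le hs.1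
  obtain ⟨⟨t₀, x₀⟩, ⟨ht₀, -⟩, hmax⟩ := (isCompact_Icc.prod isCompact_Icc : IsCompact (Icc a b ×ˢ
    Icc (0 : ℝ) 1)).exists_isMaxOn ⟨(t, 0), ht, left_mem_Icc.2 zero_le_one⟩
      (h.contDiffOn.continuousOn.mono fun p hp => ⟨hpos hp.1, mem_univ _⟩)
  have hglobal : ∀ s ∈ Icc a b, ∀ y, W s y ≤ W t₀ x₀ := fun s hs y => by
    obtain ⟨z, hz, hyz⟩ := (h.periodic s).exists_mem_Ico one_pos y 0
    rw [zero_add] at hz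
    exact hyz ▸ hmax (mk_mem_prod hs (Ico_subset_Icc_self hz))
  refine (hglobal t ht x).trans ?_
  rcases ht₀.1.eq_or_lt with rfl | hat₀
  · exact hinit x₀
  have hslice : IsLocalMax (W t₀) x₀ := Eventually.of_forall (hglobal t₀ ht₀)
  exact hcrit t₀ ⟨hat₀, ht₀.2⟩ x₀ hslice.deriv_eq_zero
    (deriv_deriv_nonpos_of_isLocalMax hslice (h.continuous_slice (hpos ht₀)).continuousAt)
    (nonneg_of_hasDerivAt_of_isMaxOn_Icc (h.hasDerivAt_time (hpos ht₀) x₀) hat₀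
      fun s hs => hglobal s ⟨hs.1, hs.2.trans ht₀.2⟩ x₀)

end IsSmoothPeriodic

namespace IsBurgersSolution

variable {f : ℝ → ℝ} {σ ν : ℝ} {u : ℝ → ℝ → ℝ} {t : ℝ}

lemma isSmoothPeriodic (hs : IsBurgersSolution f σ ν u) : IsSmoothPeriodic u where
  contDiffOn := hs.hu.mono (prod_mono_left Ioi_subset_Ici_self)
  periodic := hs.hper

lemma contDiff_slice (hs : IsBurgersSolution f σ ν u) (ht : 0 ≤ t) : ContDiff ℝ ∞ (u t) :=
  hs.hu.comp_contDiff (contDiff_const.prodMk contDiff_id) fun x => ⟨ht, mem_univ x⟩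

lemma integral_eq_zero (hs : IsBurgersSolution f σ ν u) (ht : 0 ≤ t) :
    ∫ x in (0 : ℝ)..1, u t x = 0 := by
  rw [intervalIntegral.integral_of_le zero_le_one, hs.hmean t ht]

lemma timeDeriv_eq (hs : IsBurgersSolution f σ ν u) (ht : 0 < t) (x : ℝ) :
    timeDeriv u t x =
      ν * iteratedDeriv 2 (u t) x - deriv f (u t x) * iteratedDeriv 1 (u t) x := by
  have hpde := hs.hpde t ht x
  rw [iteratedDeriv_succ, iteratedDeriv_one, timeDeriv]
  linarith

lemma timeDeriv_iteratedDeriv_one (hs : IsBurgersSolution f σ ν u) (ht : 0 < t) (x : ℝ) :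
    timeDeriv (fun s => iteratedDeriv 1 (u s)) t x = ν * iteratedDeriv 3 (u t) x -
      (iteratedDeriv 2 f (u t x) * iteratedDeriv 1 (u t) x ^ 2 +
        deriv f (u t x) * iteratedDeriv 2 (u t) x) := by
  have hslice := hs.contDiff_slice ht.le
  have hderiv : ∀ m, HasDerivAt (iteratedDeriv m (u t)) (iteratedDeriv (m + 1) (u t) x) x :=
    fun m => by
      rw [iteratedDeriv_succ]
      exact ((contDiff_iteratedDeriv_of_contDiff_infty hslice m).differentiable
        (by simp) x).hasDerivAt
  have hf' : HasDerivAt (deriv f) (iteratedDeriv 2 f (u t x)) (u t x) := by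
    rw [iteratedDeriv_succ, iteratedDeriv_one]
    exact (((contDiff_infty_iff_deriv.1 hs.hf).2.differentiable (by simp)) _).hasDerivAt
  have hu : HasDerivAt (u t) (iteratedDeriv 1 (u t) x) x := by simpa using hderiv 0
  simp only [iteratedDeriv_one]
  rw [hs.isSmoothPeriodic.timeDeriv_deriv ht, funext (hs.timeDeriv_eq ht)]
  refine (((hderiv 2).const_mul ν).sub ((hf'.comp x hu).mul (hderiv 1))).deriv.trans ?_
  simp only [comp_apply, iteratedDeriv_one]
  ring

/-- Oleinik's one-sided Lipschitz bound. At a positive space-time maximum of `(t - a) u_x` the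
equation for `u_x` leaves only `0 ≤ u_x - (t - a) f''(u) u_x²`. -/
lemma sub_mul_iteratedDeriv_one_le (hs : IsBurgersSolution f σ ν u) {a : ℝ} (ha : 0 < a)
    (hat : a ≤ t) (x : ℝ) : (t - a) * iteratedDeriv 1 (u t) x ≤ σ⁻¹ := by
  have hshift : IsSmoothPeriodic fun s _ => s - a :=
    ⟨(contDiff_fst.sub contDiff_const).contDiffOn, fun _ _ => rfl⟩
  refine (hshift.mul (hs.isSmoothPeriodic.iteratedDeriv_space 1)).le_of_forall_critical ha
    (fun x => by simpa using (inv_pos.2 hs.hσ).le) (fun s hsa y hcrit hcrit₂ htime => ?_)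
    (right_mem_Icc.2 hat) x
  have hs0 : 0 < s := ha.trans hsa.1
  have hsa0 : 0 < s - a := sub_pos.2 hsa.1
  simp only [deriv_const_mul_field', ← iteratedDeriv_succ] at hcrit hcrit₂
  have hq : iteratedDeriv 2 (u s) y = 0 := (mul_eq_zero.1 hcrit).resolve_left hsa0.ne'
  have hr : iteratedDeriv 3 (u s) y ≤ 0 := nonpos_of_mul_nonpos_right hcrit₂ hsa0
  have hderiv : timeDeriv (fun r z => (r - a) * iteratedDeriv 1 (u r) z) s y =
      iteratedDeriv 1 (u s) y + (s - a) * timeDeriv (fun r => iteratedDeriv 1 (u r)) s y := by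
    refine (((hasDerivAt_id s).sub_const a).mul
      ((hs.isSmoothPeriodic.iteratedDeriv_space 1).hasDerivAt_time hs0 y)).deriv.trans ?_
    simp only [id_eq, one_mul]
  rw [hderiv, hs.timeDeriv_iteratedDeriv_one hs0, hq] at htime
  set p := iteratedDeriv 1 (u s) y
  rcases le_or_gt p 0 with hp | hp
  · exact (mul_nonpos_of_nonneg_of_nonpos hsa0.le hp).trans (inv_pos.2 hs.hσ).le
  have hdiff : 0 ≤ p * (1 - (s - a) * iteratedDeriv 2 f (u s y) * p) := by
    linarith [mul_nonpos_of_nonneg_of_nonpos (mul_pos hsa0 hs.hν).le hr]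
  have hconv : σ * ((s - a) * p) ≤ 1 := by
    nlinarith [nonneg_of_mul_nonneg_right hdiff hp,
      mul_le_mul_of_nonneg_right (hs.hconv (u s y)) (mul_pos hsa0 hp).le]
  rwa [← one_div, le_div_iff₀' hs.hσ]

lemma deriv_le (hs : IsBurgersSolution f σ ν u) (ht : 0 < t) (x : ℝ) :
    deriv (u t) x ≤ (σ * t)⁻¹ := by
  have hlim : Tendsto (fun a => (t - a) * iteratedDeriv 1 (u t) x) (𝓝[>] 0)
      (𝓝 ((t - 0) * iteratedDeriv 1 (u t) x)) :=
    (tendsto_nhdsWithin_of_tendsto_nhds tendsto_id).const_sub t |>.mul_const _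
  have hbound := le_of_tendsto hlim <| by
    filter_upwards [Ioo_mem_nhdsGT ht] with a ha
      using hs.sub_mul_iteratedDeriv_one_le ha.1 ha.2.le x
  rw [sub_zero, iteratedDeriv_one] at hbound
  rw [mul_inv, ← div_eq_mul_inv, le_div_iff₀' ht]
  exact hbound

lemma deriv_le_of_le (hs : IsBurgersSolution f σ ν u) {a : ℝ} (ha : 0 < a) (hat : a ≤ t) (x : ℝ) :
    deriv (u t) x ≤ (σ * a)⁻¹ :=
  (hs.deriv_le (ha.trans_le hat) x).trans
    (inv_anti₀ (mul_pos hs.hσ ha) (mul_le_mul_of_nonneg_left hat hs.hσ.le))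

lemma abs_apply_le_of_le (hs : IsBurgersSolution f σ ν u) {a : ℝ} (ha : 0 < a) (hat : a ≤ t)
    (x : ℝ) : |u t x| ≤ (σ * a)⁻¹ := by
  have ht : 0 ≤ t := ha.le.trans hat
  have hslice := hs.contDiff_slice ht
  obtain ⟨z, -, hz⟩ := exists_eq_zero_of_integral_eq_zero zero_ne_one hslice.continuous.continuousOn
    (hs.integral_eq_zero ht)
  simpa using abs_le_of_periodic_of_deriv_le (hs.isSmoothPeriodic.periodic t) one_pos
    (hslice.differentiable (by simp)) hz (hs.deriv_le_of_le ha hat) x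

lemma rescaledEnergy_one_le (hs : IsBurgersSolution f σ ν u) {M : ℝ} (ht : 0 ≤ t)
    (hM : sobLp 1 2 (u t) ^ 2 ≤ M * ν⁻¹) : rescaledEnergy ν 1 (u t) ≤ M := by
  rw [rescaledEnergy_one (continuous_iteratedDeriv_of_contDiff_infty (hs.contDiff_slice ht) 1)]
  rwa [← div_eq_mul_inv, le_div_iff₀' hs.hν] at hM

lemma hasDerivAt_rescaledEnergy_zero (hs : IsBurgersSolution f σ ν u) (ht : 0 < t) :
    HasDerivAt (fun s => rescaledEnergy ν 0 (u s)) (-2 * rescaledEnergy ν 1 (u t)) t := by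
  have hper := hs.isSmoothPeriodic.periodic t
  have hslice := hs.contDiff_slice ht.le
  have hu : Continuous (u t) := hslice.continuous
  have hp : Continuous (iteratedDeriv 1 (u t)) :=
    continuous_iteratedDeriv_of_contDiff_infty hslice 1
  have hq : Continuous (iteratedDeriv 2 (u t)) :=
    continuous_iteratedDeriv_of_contDiff_infty hslice 2
  have hf' : Continuous (deriv f) := hs.hf.continuous_deriv (by simp)
  have hvisc : ∫ x in (0 : ℝ)..1, u t x * iteratedDeriv 2 (u t) x =
      -∫ x in (0 : ℝ)..1, iteratedDeriv 1 (u t) x ^ 2 := by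
    have hparts := integral_mul_deriv_of_periodic hper (periodic_iteratedDeriv hper 1)
      (hslice.of_le (by simp))
      ((contDiff_iteratedDeriv_of_contDiff_infty hslice 1).of_le (by simp))
    simpa only [iteratedDeriv_succ, iteratedDeriv_zero, ← sq] using hparts
  have hflux : ∫ x in (0 : ℝ)..1, deriv f (u t x) * u t x * iteratedDeriv 1 (u t) x = 0 := by
    simpa only [iteratedDeriv_one] using integral_comp_mul_deriv_eq_zero_of_periodic
      (g := fun y => deriv f y * y) hper (hslice.of_le (by simp)) (by fun_prop)
  have hsplit : ∫ x in (0 : ℝ)..1, u t x * timeDeriv u t x =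
      ν * (∫ x in (0 : ℝ)..1, u t x * iteratedDeriv 2 (u t) x) -
        ∫ x in (0 : ℝ)..1, deriv f (u t x) * u t x * iteratedDeriv 1 (u t) x := by
    rw [← intervalIntegral.integral_const_mul, ← intervalIntegral.integral_sub
      (Continuous.intervalIntegrable (by fun_prop) _ _)
      (Continuous.intervalIntegrable (by fun_prop) _ _)]
    refine intervalIntegral.integral_congr fun x _ => ?_
    simp only [hs.timeDeriv_eq ht]
    ring
  refine (hs.isSmoothPeriodic.hasDerivAt_rescaledEnergy_zero ht ν).congr_deriv ?_
  rw [hsplit, hvisc, hflux, rescaledEnergy_succ]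
  ring

lemma mul_deriv_rescaledEnergy_one_le (hs : IsBurgersSolution f σ ν u) (ht : 0 < t) {F : ℝ}
    (hF : ∀ x, |deriv f (u t x)| ≤ F) :
    ν * deriv (fun s => rescaledEnergy ν 1 (u s)) t ≤
      -rescaledEnergy ν 2 (u t) + F ^ 2 * rescaledEnergy ν 1 (u t) := by
  have hslice := hs.contDiff_slice ht.le
  have hforced := hs.isSmoothPeriodic.mul_deriv_rescaledEnergy_succ_le ht hs.hν.le 0
  simp only [iteratedDeriv_zero, hs.timeDeriv_eq ht, sub_sub_cancel_left, neg_sq] at hforced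
  exact hforced.trans <| add_le_add_right (pow_mul_integral_mul_sq_le hs.hν.le hslice
    ((hs.hf.continuous_deriv (by simp)).comp hslice.continuous)
    (fun x => sq_le_sq.2 ((hF x).trans (le_abs_self F))) 0) _

lemma mul_deriv_rescaledEnergy_two_le (hs : IsBurgersSolution f σ ν u) (ht : 0 < t) {F G : ℝ}
    (hF : ∀ x, |deriv f (u t x)| ≤ F) (hG : ∀ x, |iteratedDeriv 2 f (u t x)| ≤ G) :
    ν * deriv (fun s => rescaledEnergy ν 2 (u s)) t ≤ -rescaledEnergy ν 3 (u t) +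
      2 * (G ^ 2 * (rescaledEnergy ν 1 (u t) + rescaledEnergy ν 2 (u t)) *
        rescaledEnergy ν 1 (u t) + F ^ 2 * rescaledEnergy ν 2 (u t)) := by
  have hslice := hs.contDiff_slice ht.le
  have hforced := hs.isSmoothPeriodic.mul_deriv_rescaledEnergy_succ_le ht hs.hν.le 1
  simp only [hs.timeDeriv_iteratedDeriv_one ht, sub_sub_cancel_left, neg_sq] at hforced
  exact hforced.trans <| add_le_add_right (pow_mul_integral_add_sq_le hs.hν hslice
    (hs.isSmoothPeriodic.periodic t)
    ((continuous_iteratedDeriv_of_contDiff_infty hs.hf 2).comp hslice.continuous)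
    ((hs.hf.continuous_deriv (by simp)).comp hslice.continuous)
    (fun x => sq_le_sq.2 ((hG x).trans (le_abs_self G)))
    (fun x => sq_le_sq.2 ((hF x).trans (le_abs_self F)))) _

lemma hasDerivAt_rescaledEnergy_succ (hs : IsBurgersSolution f σ ν u) (ht : 0 < t) (m : ℕ) :
    HasDerivAt (fun s => rescaledEnergy ν (m + 1) (u s))
      (deriv (fun s => rescaledEnergy ν (m + 1) (u s)) t) t :=
  (hs.isSmoothPeriodic.hasDerivAt_rescaledEnergy_succ ht ν m).differentiableAt.hasDerivAt

lemma continuousOn_rescaledEnergy_Icc (hs : IsBurgersSolution f σ ν u) {a b : ℝ} (ha : 0 < a)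
    (m : ℕ) : ContinuousOn (fun t => rescaledEnergy ν m (u t)) (Icc a b) :=
  (hs.isSmoothPeriodic.continuousOn_rescaledEnergy ν m).mono fun _ ht => ha.trans_le ht.1

lemma intervalIntegrable_rescaledEnergy (hs : IsBurgersSolution f σ ν u) {a b : ℝ} (ha : 0 < a)
    (hab : a ≤ b) (m : ℕ) :
    IntervalIntegrable (fun t => rescaledEnergy ν m (u t)) volume a b :=
  (hs.continuousOn_rescaledEnergy_Icc ha m).intervalIntegrable_of_Icc hab

lemma integral_rescaledEnergy_mono_interval (hs : IsBurgersSolution f σ ν u) {a a' b b' : ℝ}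
    (ha : 0 < a) (haa' : a ≤ a') (hab' : a' ≤ b') (hb'b : b' ≤ b) (m : ℕ) :
    ∫ t in a'..b', rescaledEnergy ν m (u t) ≤ ∫ t in a..b, rescaledEnergy ν m (u t) :=
  intervalIntegral.integral_mono_interval haa' hab' hb'b
    (ae_of_all _ fun t => rescaledEnergy_nonneg hs.hν.le m (u t))
    (hs.intervalIntegrable_rescaledEnergy ha (haa'.trans (hab'.trans hb'b)) m)

lemma exists_rescaledEnergy_two_le (hs : IsBurgersSolution f σ ν u) {a I : ℝ} (ha : 0 < a)
    (hI : ∫ t in a / 2..a, rescaledEnergy ν 2 (u t) ≤ I) :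
    ∃ s ∈ Ioo (a / 2) a, rescaledEnergy ν 2 (u s) ≤ 2 / a * I := by
  have hle : a / 2 ≤ a := half_le_self ha.le
  obtain ⟨s, hsa, hsE⟩ := exists_sub_mul_eq_integral (half_lt_self ha).ne
    (uIcc_of_le hle ▸ hs.continuousOn_rescaledEnergy_Icc (b := a) (half_pos ha) 2)
  refine ⟨s, uIoo_of_le hle ▸ hsa, ?_⟩
  rw [div_mul_eq_mul_div, le_div_iff₀ ha]
  linarith

lemma integral_rescaledEnergy_two_le (hs : IsBurgersSolution f σ ν u) (hν : ν ≤ 1)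
    {a b F M : ℝ} (ha : 0 < a) (hab : a ≤ b) (hF : ∀ t ∈ Icc a b, ∀ x, |deriv f (u t x)| ≤ F)
    (hM : ∀ t ∈ Icc a b, rescaledEnergy ν 1 (u t) ≤ M) :
    ∫ t in a..b, rescaledEnergy ν 2 (u t) ≤ M + F ^ 2 * M * (b - a) := by
  have hE := hs.continuousOn_rescaledEnergy_Icc (b := b) ha
  have hbound := integral_le_of_mul_deriv_le hab hs.hν.le
    (fun t ht => hs.hasDerivAt_rescaledEnergy_succ (ha.trans_le ht.1) 0) (hE 2)
    (k := fun _ => F ^ 2 * M) continuousOn_const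
    (fun t ht => (hs.mul_deriv_rescaledEnergy_one_le (ha.trans_le ht.1) (hF t ht)).trans
      (add_le_add_right (mul_le_mul_of_nonneg_left (hM t ht) (sq_nonneg F)) _))
    (rescaledEnergy_nonneg hs.hν.le 1 _)
  refine hbound.trans (add_le_add ?_ ?_)
  · have hEa := rescaledEnergy_nonneg hs.hν.le 1 (u a)
    exact (mul_le_of_le_one_left hEa hν).trans (hM a (left_mem_Icc.2 hab))
  · rw [intervalIntegral.integral_const, smul_eq_mul, mul_comm]

lemma integral_rescaledEnergy_three_le (hs : IsBurgersSolution f σ ν u) (hν : ν ≤ 1)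
    {a b F G M : ℝ} (ha : 0 < a) (hab : a ≤ b) (hF : ∀ t ∈ Icc a b, ∀ x, |deriv f (u t x)| ≤ F)
    (hG : ∀ t ∈ Icc a b, ∀ x, |iteratedDeriv 2 f (u t x)| ≤ G)
    (hM : ∀ t ∈ Icc a b, rescaledEnergy ν 1 (u t) ≤ M) :
    ∫ t in a..b, rescaledEnergy ν 3 (u t) ≤ rescaledEnergy ν 2 (u a) +
      2 * ((G ^ 2 * M + F ^ 2) * (∫ t in a..b, rescaledEnergy ν 2 (u t)) +
        G ^ 2 * M ^ 2 * (b - a)) := by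
  have hE := hs.continuousOn_rescaledEnergy_Icc (b := b) ha
  have hnonneg := rescaledEnergy_nonneg hs.hν.le
  have hrate : ∀ t ∈ Icc a b, ν * deriv (fun s => rescaledEnergy ν 2 (u s)) t ≤
      -rescaledEnergy ν 3 (u t) +
        (2 * (G ^ 2 * M + F ^ 2) * rescaledEnergy ν 2 (u t) + 2 * (G ^ 2 * M ^ 2)) :=
    fun t ht => by
      have hquad : G ^ 2 * (rescaledEnergy ν 1 (u t) + rescaledEnergy ν 2 (u t)) *
          rescaledEnergy ν 1 (u t) ≤ G ^ 2 * (M + rescaledEnergy ν 2 (u t)) * M := by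
        have hE1 := hnonneg 1 (u t)
        have hE2 := hnonneg 2 (u t)
        have hM0 : 0 ≤ M := hE1.trans (hM t ht)
        gcongr <;> exact hM t ht
      linarith [hs.mul_deriv_rescaledEnergy_two_le (ha.trans_le ht.1) (hF t ht) (hG t ht)]
  have hbound := integral_le_of_mul_deriv_le hab hs.hν.le
    (fun t ht => hs.hasDerivAt_rescaledEnergy_succ (ha.trans_le ht.1) 1) (hE 3)
    (k := fun t => 2 * (G ^ 2 * M + F ^ 2) * rescaledEnergy ν 2 (u t) + 2 * (G ^ 2 * M ^ 2))
    (((hE 2).const_mul _).add continuousOn_const) hrate (hnonneg 2 _)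
  rw [intervalIntegral.integral_add
    ((hs.intervalIntegrable_rescaledEnergy ha hab 2).const_mul _) intervalIntegrable_const,
    intervalIntegral.integral_const_mul, intervalIntegral.integral_const, smul_eq_mul] at hbound
  linarith [mul_le_of_le_one_left (hnonneg 2 (u a)) hν]

/-- Dissipation over `[a / 2, a]` makes `E₂` of order one at some time there, from which `E₃` is
integrated. -/
lemma integral_rescaledEnergy_two_add_three_le (hs : IsBurgersSolution f σ ν u) (hν : ν ≤ 1)
    {a b F G M : ℝ} (ha : 0 < a) (hab : a ≤ b)
    (hF : ∀ t ∈ Icc (a / 2) b, ∀ x, |deriv f (u t x)| ≤ F)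
    (hG : ∀ t ∈ Icc (a / 2) b, ∀ x, |iteratedDeriv 2 f (u t x)| ≤ G)
    (hM : ∀ t ∈ Icc (a / 2) b, rescaledEnergy ν 1 (u t) ≤ M) :
    ∫ t in a..b, (rescaledEnergy ν 2 (u t) + rescaledEnergy ν 3 (u t)) ≤
      (1 + 2 / a + 2 * (G ^ 2 * M + F ^ 2)) * (M + F ^ 2 * M * b) + 2 * (G ^ 2 * M ^ 2 * b) := by
  have ha2 : 0 < a / 2 := half_pos ha
  have hle : a / 2 ≤ a := half_le_self ha.le
  have hM0 : 0 ≤ M :=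
    (rescaledEnergy_nonneg hs.hν.le 1 _).trans (hM (a / 2) (left_mem_Icc.2 (hle.trans hab)))
  have htwo : ∫ t in a / 2..b, rescaledEnergy ν 2 (u t) ≤ M + F ^ 2 * M * b :=
    (hs.integral_rescaledEnergy_two_le hν ha2 (hle.trans hab) hF hM).trans
      (add_le_add_right (mul_le_mul_of_nonneg_left (by linarith) (by positivity)) M)
  have htwo_sub := fun {r s : ℝ} (hr : a / 2 ≤ r) (hrs : r ≤ s) (hsb : s ≤ b) =>
    (hs.integral_rescaledEnergy_mono_interval ha2 hr hrs hsb 2).trans htwo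
  obtain ⟨s, hsa, hstart⟩ := hs.exists_rescaledEnergy_two_le ha (htwo_sub le_rfl hle hab)
  have hsb : s ≤ b := hsa.2.le.trans hab
  have hs0 : 0 < s := ha2.trans hsa.1
  have hsub : Icc s b ⊆ Icc (a / 2) b := Icc_subset_Icc_left hsa.1.le
  have hthree := hs.integral_rescaledEnergy_three_le hν hs0 hsb
    (fun t ht => hF t (hsub ht)) (fun t ht => hG t (hsub ht)) fun t ht => hM t (hsub ht)
  rw [intervalIntegral.integral_add (hs.intervalIntegrable_rescaledEnergy ha hab 2)
    (hs.intervalIntegrable_rescaledEnergy ha hab 3)]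
  linarith [htwo_sub hle hab le_rfl,
    hs.integral_rescaledEnergy_mono_interval hs0 hsa.2.le hab le_rfl 3,
    mul_le_mul_of_nonneg_left (htwo_sub hsa.1.le hsb le_rfl)
      (by positivity : 0 ≤ G ^ 2 * M + F ^ 2),
    mul_le_mul_of_nonneg_left (sub_le_self b hs0.le) (by positivity : 0 ≤ G ^ 2 * M ^ 2)]

lemma exists_forall_integral_rescaledEnergy_le (hf : ContDiff ℝ ∞ f) {a b M : ℝ}
    (ha : 0 < a) (hab : a ≤ b) :
    ∃ L > 0, ∀ ν u, ν ≤ 1 → IsBurgersSolution f σ ν u →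
      (∀ t ∈ Icc (a / 2) b, rescaledEnergy ν 1 (u t) ≤ M) →
      ∫ t in a..b, (rescaledEnergy ν 2 (u t) + rescaledEnergy ν 3 (u t)) ≤ L := by
  set B := (σ * (a / 2))⁻¹
  obtain ⟨F, hF⟩ := (isCompact_Icc (a := -B) (b := B)).exists_bound_of_continuousOn
    (hf.continuous_deriv (by simp)).continuousOn
  obtain ⟨G, hG⟩ := (isCompact_Icc (a := -B) (b := B)).exists_bound_of_continuousOn
    (continuous_iteratedDeriv_of_contDiff_infty hf 2).continuousOn
  have hmem : ∀ ν u, IsBurgersSolution f σ ν u → ∀ t ∈ Icc (a / 2) b, ∀ x, u t x ∈ Icc (-B) B :=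
    fun ν u hs t ht x => abs_le.1 (hs.abs_apply_le_of_le (half_pos ha) ht.1 x)
  exact ⟨_, one_pos.trans_le (le_max_left 1 _), fun ν u hν hs hM => le_max_of_le_right
    (hs.integral_rescaledEnergy_two_add_three_le hν ha hab
      (fun t ht x => hF _ (hmem ν u hs t ht x)) (fun t ht x => hG _ (hmem ν u hs t ht x)) hM)⟩

lemma continuousOn_rescaledEnergy_zero (hs : IsBurgersSolution f σ ν u) :
    ContinuousOn (fun t => rescaledEnergy ν 0 (u t)) (Ici 0) := by
  have hclip : Continuous fun p : ℝ × ℝ => u (max p.1 0) p.2 :=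
    hs.hu.continuousOn.comp_continuous (f := fun p : ℝ × ℝ => (max p.1 0, p.2)) (by fun_prop)
      fun p => mk_mem_prod (mem_Ici.2 (le_max_right _ _)) (mem_univ _)
  refine (intervalIntegral.continuous_parametric_intervalIntegral_of_continuous' (μ := volume)
    (f := fun t x => u (max t 0) x ^ 2) (hclip.fun_pow 2) 0 1).continuousOn.congr fun t ht => ?_
  simp only [rescaledEnergy_zero, max_eq_left (mem_Ici.1 ht)]

lemma rescaledEnergy_zero_sub_le (hs : IsBurgersSolution f σ ν u) {M : ℝ} (ht : 0 ≤ t)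
    (hM : ∀ s, 0 < s → rescaledEnergy ν 1 (u s) ≤ M) :
    rescaledEnergy ν 0 (u 0) - 2 * M * t ≤ rescaledEnergy ν 0 (u t) := by
  have hderiv : ∀ s ∈ interior (Ici (0 : ℝ)), HasDerivAt (fun s => rescaledEnergy ν 0 (u s))
      (-2 * rescaledEnergy ν 1 (u s)) s := fun s hs0 => by
    rw [interior_Ici] at hs0
    exact hs.hasDerivAt_rescaledEnergy_zero hs0
  have hdecay := (convex_Ici (0 : ℝ)).mul_sub_le_image_sub_of_le_deriv
    hs.continuousOn_rescaledEnergy_zero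
    (fun s hs0 => (hderiv s hs0).differentiableAt.differentiableWithinAt) (C := -2 * M)
    (fun s hs0 => by
      rw [(hderiv s hs0).deriv]
      rw [interior_Ici] at hs0
      linarith [hM s hs0]) 0 self_mem_Ici t ht ht
  linarith

lemma integral_rescaledEnergy_zero_mul_one (hs : IsBurgersSolution f σ ν u) {a b : ℝ} (ha : 0 < a)
    (hab : a ≤ b) :
    ∫ t in a..b, rescaledEnergy ν 0 (u t) * rescaledEnergy ν 1 (u t) =
      (rescaledEnergy ν 0 (u a) ^ 2 - rescaledEnergy ν 0 (u b) ^ 2) / 4 := by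
  have hE := hs.continuousOn_rescaledEnergy_Icc (b := b) ha
  have hderiv : ∀ t ∈ uIcc a b, HasDerivAt (fun t => -rescaledEnergy ν 0 (u t) ^ 2 / 4)
      (rescaledEnergy ν 0 (u t) * rescaledEnergy ν 1 (u t)) t := fun t ht => by
    rw [uIcc_of_le hab] at ht
    have hsq := (hs.hasDerivAt_rescaledEnergy_zero (ha.trans_le ht.1)).fun_pow 2
    exact (hsq.fun_neg.div_const 4).congr_deriv (by push_cast; ring)
  exact (intervalIntegral.integral_eq_sub_of_hasDerivAt hderiv
    (((hE 0).mul (hE 1)).intervalIntegrable_of_Icc hab)).trans (by ring)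

lemma sobLp_zero_one_pos (hs : IsBurgersSolution f σ ν u) : 0 < sobLp 0 1 (u 0) := by
  obtain ⟨x, hx⟩ := hs.hinit
  exact sobLp_pos (continuous_iteratedDeriv_of_contDiff_infty (hs.contDiff_slice le_rfl) 0)
    (hs.hper 0) one_ne_zero (by simpa using hx)

lemma burgersD_pos (hs : IsBurgersSolution f σ ν u) : 0 < burgersD u :=
  (inv_pos.2 hs.sobLp_zero_one_pos).trans_le (le_max_left _ _)

lemma inv_sq_burgersD_le (hs : IsBurgersSolution f σ ν u) :
    (burgersD u ^ 2)⁻¹ ≤ rescaledEnergy ν 0 (u 0) := by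
  have hu0 := continuous_iteratedDeriv_of_contDiff_infty (hs.contDiff_slice le_rfl) 0
  have hD : (burgersD u)⁻¹ ≤ sobLp 0 2 (u 0) :=
    (inv_le_of_inv_le₀ hs.sobLp_zero_one_pos (le_max_left _ _)).trans
      (sobLp_mono_exponent hu0 one_le_two)
  rw [← inv_pow]
  refine (pow_le_pow_left₀ (inv_pos.2 hs.burgersD_pos).le hD 2).trans_eq ?_
  simp only [sobLp_two_sq hu0, rescaledEnergy_zero, iteratedDeriv_zero]

end IsBurgersSolution

section Times

variable {f : ℝ → ℝ} {σ D Ct ν : ℝ} {u : ℝ → ℝ → ℝ}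

lemma burgersT₁_pos (hD : 0 < D) (hCt : 0 < Ct) : 0 < burgersT₁ D Ct := by
  rw [burgersT₁]
  positivity

lemma burgersT₁_lt_burgersT₂ (hD : 0 < D) (hCt : 0 < Ct) : burgersT₁ D Ct < burgersT₂ σ D Ct :=
  lt_max_of_lt_left (by linarith [burgersT₁_pos hD hCt])

/-- At time `T₁` the energy is still at least `D⁻² / 2`, and by time `T₂` Oleinik's bound has
brought it below `D⁻² / 4`; the loss controls the integral of `E₀ E₁` because `E₀' = -2 E₁`. -/
lemma IsBurgersSolution.le_integral_rescaledEnergy_zero_mul_one (hs : IsBurgersSolution f σ ν u)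
    (hCt : 0 < Ct) (hE1 : ∀ t, 0 < t → rescaledEnergy ν 1 (u t) ≤ Ct) :
    3 / 64 * (burgersD u ^ 2)⁻¹ ^ 2 ≤
      ∫ t in burgersT₁ (burgersD u) Ct..burgersT₂ σ (burgersD u) Ct,
        rescaledEnergy ν 0 (u t) * rescaledEnergy ν 1 (u t) := by
  set D := burgersD u
  set T₂ := burgersT₂ σ D Ct
  have hD : 0 < D := hs.burgersD_pos
  have hT₁ : 0 < burgersT₁ D Ct := burgersT₁_pos hD hCt
  have hT₁₂ : burgersT₁ D Ct < T₂ := burgersT₁_lt_burgersT₂ hD hCt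
  have hstart : (D ^ 2)⁻¹ / 2 ≤ rescaledEnergy ν 0 (u (burgersT₁ D Ct)) := by
    have hloss : 2 * Ct * burgersT₁ D Ct = (D ^ 2)⁻¹ / 2 := by
      rw [burgersT₁]
      field_simp
      norm_num
    linarith [hs.rescaledEnergy_zero_sub_le hT₁.le hE1, hs.inv_sq_burgersD_le]
  have hend : rescaledEnergy ν 0 (u T₂) ≤ (D ^ 2)⁻¹ / 4 := by
    have hT₂ : 0 < T₂ := hT₁.trans hT₁₂
    have hσT₂ : 2 * D ≤ σ * T₂ := by
      rw [mul_comm σ, ← div_le_iff₀ hs.hσ, div_eq_mul_inv]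
      exact le_max_right _ _
    have habs := fun x =>
      (hs.abs_apply_le_of_le hT₂ le_rfl x).trans (inv_anti₀ (by positivity) hσT₂)
    refine (rescaledEnergy_zero_le (hs.contDiff_slice hT₂.le).continuous habs habs).trans_eq ?_
    field_simp
    norm_num
  rw [hs.integral_rescaledEnergy_zero_mul_one hT₁ hT₁₂.le]
  linarith [pow_le_pow_left₀ (by positivity) hstart 2,
    pow_le_pow_left₀ (rescaledEnergy_nonneg hs.hν.le 0 _) hend 2]

end Times

section Conclusion

variable {f : ℝ → ℝ} {σ D Ct ν : ℝ} {u : ℝ → ℝ → ℝ}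

lemma IsBurgersSolution.half_le_mul_volume_real_rescaledEnergy (hs : IsBurgersSolution f σ ν u)
    {a b M η L : ℝ} (ha : 0 < a) (hab : a < b)
    (hM : ∀ t ∈ Icc a b, rescaledEnergy ν 1 (u t) ≤ M) (hη : 0 < η)
    (hηE : η ≤ ∫ t in a..b, rescaledEnergy ν 0 (u t) * rescaledEnergy ν 1 (u t)) (hL : 0 < L)
    (hEL : ∫ t in a..b, (rescaledEnergy ν 2 (u t) + rescaledEnergy ν 3 (u t)) ≤ L) :
    η / 2 ≤ (σ * a)⁻¹ ^ 2 * M * volume.real {t | t ∈ Icc a b ∧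
      η / (4 * (b - a)) ≤ rescaledEnergy ν 0 (u t) * rescaledEnergy ν 1 (u t) ∧
      rescaledEnergy ν 2 (u t) + rescaledEnergy ν 3 (u t) ≤
        (σ * a)⁻¹ ^ 2 * M * (4 * L / η)} := by
  have hE := hs.continuousOn_rescaledEnergy_Icc (b := b) ha
  have hnonneg := rescaledEnergy_nonneg hs.hν.le
  refine half_le_mul_volume_real hab ((hE 0).mul (hE 1)) ((hE 2).add (hE 3))
    (fun t ht => ?_) (fun t _ => add_nonneg (hnonneg 2 _) (hnonneg 3 _)) hη hηE hL hEL
  have habs := fun x => hs.abs_apply_le_of_le ha ht.1 x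
  rw [sq]
  exact mul_le_mul (rescaledEnergy_zero_le (hs.contDiff_slice (ha.le.trans ht.1)).continuous
    habs habs) (hM t ht) (hnonneg 1 _) (mul_self_nonneg _)

lemma exists_forall_le_volume_lCondition (hf : ContDiff ℝ ∞ f) (hσ : 0 < σ) (hD : 0 < D)
    (hCt : 0 < Ct) :
    ∃ C > 0, ∃ K > 1, ∀ ν u, ν ≤ 1 → IsBurgersSolution f σ ν u → burgersD u = D →
      (∀ t, 0 < t → rescaledEnergy ν 1 (u t) ≤ Ct) →
      ENNReal.ofReal C ≤ volume
        {t | t ∈ Icc (burgersT₁ D Ct) (burgersT₂ σ D Ct) ∧ LCondition K ν (u t)} := by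
  set T₁ := burgersT₁ D Ct
  set T₂ := burgersT₂ σ D Ct
  have hT₁ : 0 < T₁ := burgersT₁_pos hD hCt
  have hT₁₂ : T₁ < T₂ := burgersT₁_lt_burgersT₂ hD hCt
  have hT : 0 < T₂ - T₁ := sub_pos.2 hT₁₂
  obtain ⟨L, hL0, hL⟩ :=
    IsBurgersSolution.exists_forall_integral_rescaledEnergy_le (σ := σ) hf hT₁ hT₁₂.le (M := Ct)
  set B := (σ * T₁)⁻¹
  set η := 3 / 64 * (D ^ 2)⁻¹ ^ 2
  set θ := η / (4 * (T₂ - T₁))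
  set Λ := B ^ 2 * Ct * (4 * L / η)
  set K := 1 + B + (Ct * B + 2 * B ^ 3) / θ + (Ct + Λ)
  have hB : 0 < B := by positivity
  have hη : 0 < η := by positivity
  have hθ : 0 < θ := by positivity
  have hΛ : 0 < Λ := by positivity
  have hquot : 0 ≤ (Ct * B + 2 * B ^ 3) / θ := by positivity
  have hKθ : Ct * B + 2 * B ^ 3 ≤ K * θ := (div_le_iff₀ hθ).1 (by linarith)
  refine ⟨η / (2 * (B ^ 2 * Ct)), by positivity, K, by linarith, fun ν u hν hs hDu hE1 => ?_⟩
  have hdissip := hs.le_integral_rescaledEnergy_zero_mul_one hCt hE1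
  rw [hDu] at hdissip
  have hmeas := hs.half_le_mul_volume_real_rescaledEnergy hT₁ hT₁₂
    (fun t ht => hE1 t (hT₁.trans_le ht.1)) hη hdissip hL0
    (hL ν u hν hs fun t ht => hE1 t ((half_pos hT₁).trans_le ht.1))
  refine ENNReal.ofReal_le_of_le_toReal ?_
  rw [← div_div, div_le_iff₀' (by positivity)]
  refine hmeas.trans (mul_le_mul_of_nonneg_left (measureReal_mono ?_
    (measure_ne_top_of_subset (fun _ ht => ht.1) measure_Icc_lt_top.ne)) (by positivity))
  rintro t ⟨ht, hθt, hΛt⟩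
  have ht0 : 0 < t := hT₁.trans_le ht.1
  refine ⟨ht, lCondition_of_rescaledEnergy hs.hν (hs.contDiff_slice ht0.le) (hs.hper t)
    (hs.abs_apply_le_of_le hT₁ ht.1) (hs.deriv_le_of_le hT₁ ht.1) hθ hθt (hE1 t ht0) hΛt ?_ ?_ ?_
    ?_ ?_⟩ <;> nlinarith [pow_pos hB 3, mul_pos hCt hB]

end Conclusion

/-- With `C`, `K₁` as in the measure estimate for `L_K`, for
every `K ≥ K₁` and every `ν ∈ (0, K₁⁻²)`, the set `O_K` (where the condition on
`|u_x|_∞` is replaced by the analogous condition on `-min u_x`) has Lebesgue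
measure at least `C`. -/
theorem statement16 (f : ℝ → ℝ) (σ D Ct : ℝ) (hCt : 0 < Ct)
    (hCtb : ∀ ν, 0 < ν → ν ≤ 1 →
      ∀ u : ℝ → ℝ → ℝ, IsBurgersSolution f σ ν u → burgersD u = D →
        ∀ t, 0 ≤ t → sobLp 1 2 (u t) ^ 2 ≤ Ct * ν⁻¹) :
    ∃ C > 0, ∃ K₁ > (1 : ℝ),
      (∀ K, K₁ ≤ K → ∀ ν, 0 < ν → ν ≤ 1 →
        ∀ u : ℝ → ℝ → ℝ, IsBurgersSolution f σ ν u → burgersD u = D →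
          ENNReal.ofReal C ≤ volume
            {t : ℝ | t ∈ Icc (burgersT₁ D Ct) (burgersT₂ σ D Ct) ∧
              (K⁻¹ ≤ sobLp 0 ⊤ (u t) ∧ ∀ x, deriv (u t) x ≤ K) ∧
              (K⁻¹ * ν⁻¹ ≤ sobLp 1 ⊤ (u t) ∧ sobLp 1 ⊤ (u t) ≤ K * ν⁻¹) ∧
              sobLp 2 ⊤ (u t) ≤ K * (ν ^ 2)⁻¹}) ∧
      (∀ K, K₁ ≤ K → ∀ ν, 0 < ν → ν < (K₁ ^ 2)⁻¹ →
        ∀ u : ℝ → ℝ → ℝ, IsBurgersSolution f σ ν u → burgersD u = D →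
          ENNReal.ofReal C ≤ volume
            {t : ℝ | t ∈ Icc (burgersT₁ D Ct) (burgersT₂ σ D Ct) ∧
              (K⁻¹ ≤ sobLp 0 ⊤ (u t) ∧ ∀ x, deriv (u t) x ≤ K) ∧
              (K⁻¹ * ν⁻¹ ≤ -sInf (deriv (u t) '' Icc (0:ℝ) 1) ∧
                -sInf (deriv (u t) '' Icc (0:ℝ) 1) ≤ K * ν⁻¹) ∧
              sobLp 2 ⊤ (u t) ≤ K * (ν ^ 2)⁻¹}) := by
  by_cases hex : ∃ ν u, IsBurgersSolution f σ ν u ∧ burgersD u = D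
  swap
  · exact ⟨1, one_pos, 2, one_lt_two,
      fun _ _ ν _ _ u hs hD => absurd ⟨ν, u, hs, hD⟩ hex,
      fun _ _ ν _ _ u hs hD => absurd ⟨ν, u, hs, hD⟩ hex⟩
  obtain ⟨ν₀, u₀, hs₀, hD₀⟩ := hex
  obtain ⟨C, hC, K₁, hK₁, hvol⟩ :=
    exists_forall_le_volume_lCondition hs₀.hf hs₀.hσ (hD₀ ▸ hs₀.burgersD_pos) hCt
  have hE1 : ∀ ν u, ν ≤ 1 → IsBurgersSolution f σ ν u → burgersD u = D →
      ∀ t, 0 < t → rescaledEnergy ν 1 (u t) ≤ Ct := fun ν u hν hs hD t ht =>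
    hs.rescaledEnergy_one_le ht.le (hCtb ν hs.hν hν u hs hD t ht.le)
  have hK₁0 : 0 < K₁ := one_pos.trans hK₁
  refine ⟨C, hC, K₁, hK₁, fun K hK ν hν hν1 u hs hD => ?_, fun K hK ν hν hνK u hs hD => ?_⟩
  · exact (hvol ν u hν1 hs hD (hE1 ν u hν1 hs hD)).trans
      (measure_mono fun t ⟨ht, hL⟩ => ⟨ht, hL.mono hK₁0 hν hK⟩)
  · have hν1 : ν ≤ 1 := hνK.le.trans (inv_le_one_of_one_le₀ (one_le_pow₀ hK₁.le))
    refine (hvol ν u hν1 hs hD (hE1 ν u hν1 hs hD)).trans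
      (measure_mono fun t ⟨ht, hL⟩ => ⟨ht, ?_⟩)
    have ht0 : 0 ≤ t := (burgersT₁_pos (hD ▸ hs.burgersD_pos) hCt).le.trans ht.1
    exact (hL.oCondition (hs.contDiff_slice ht0) (hs.hper t) hK₁0 hν hνK).mono hK₁0 hν hK
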